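/- Assume the families A_{N,1}, …, A_{N,L} are independent, each is permutation invariant, and each satisfies the growth bound (MS). With the test graph T = (V,E) as in the construction below, for every partition π of V such that the graph of colored components GCC(T^π) is not a tree, one has τ⁰_N[T^π] = O(N^{−1}) as N → ∞. -/

import Mathlib

open MeasureTheory ProbabilityTheory Filter Matrix Asymptotics
open scoped BigOperators ENNReal
open scoped Classical

noncomputable section

/-- The diagonal projection `Δ` on `N × N` complex matrices. -/
def dproj {N : ℕ} (A : Matrix (Fin N) (Fin N) ℂ) : Matrix (Fin N) (Fin N) ℂ :=
  Matrix.of fun i j => if i = j then A i j else 0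

/-- The operator norm of a matrix acting on `ℓ²({1,…,N})`. -/
def matOpNorm {N : ℕ} (A : Matrix (Fin N) (Fin N) ℂ) : ℝ :=
  ‖Matrix.toEuclideanCLM (𝕜 := ℂ) A‖

/-! ### Multigraph combinatorics -/

section Graph

variable {V E : Type} (src tgt : E → V)

/-- Adjacency through an edge avoiding a forbidden set `F` of edges
(direction is ignored). -/
def adjOn (F : Set E) (a b : V) : Prop :=
  ∃ e, e ∉ F ∧ ((src e = a ∧ tgt e = b) ∨ (src e = b ∧ tgt e = a))

/-- Reachability in the graph, using only edges outside `F`. -/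
def reachOn (F : Set E) : V → V → Prop :=
  Relation.ReflTransGen (adjOn src tgt F)

lemma adjOn_symm (F : Set E) : Symmetric (adjOn src tgt F) := by
  rintro a b ⟨e, he, h⟩
  exact ⟨e, he, h.symm⟩

/-- The setoid of connectivity using edges outside `F`. -/
def connSetoid (F : Set E) : Setoid V :=
  ⟨reachOn src tgt F,
    ⟨fun _ => Relation.ReflTransGen.refl,
     fun h => (@Relation.ReflTransGen.stdSymm _ _ ⟨fun _ _ h' => adjOn_symm src tgt F h'⟩).symm _ _ h,
     fun h h' => Relation.ReflTransGen.trans h h'⟩⟩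

/-- Number of connected components of the graph with the edges in `F` deleted. -/
def ncompAvoiding (F : Set E) : ℕ :=
  Nat.card (Quotient (connSetoid src tgt F))

/-- Number of connected components. -/
def ncomp : ℕ := ncompAvoiding src tgt ∅

/-- The graph is connected. -/
def IsConnectedGraph : Prop := ∀ a b : V, reachOn src tgt ∅ a b

/-- A cut edge (bridge): deleting it disconnects its endpoints. -/
def IsCutEdge (e : E) : Prop := ¬ reachOn src tgt {e} (src e) (tgt e)

/-- The set of cut edges. -/
def cutEdges : Set E := {e | IsCutEdge src tgt e}

/-- The setoid whose classes are the two-edge connected components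
(connected components after deleting all cut edges). -/
def teccSetoid : Setoid V := connSetoid src tgt (cutEdges src tgt)

/-- Degree, in the forest of two-edge connected components, of a
two-edge connected component: the number of cut edges incident to it. -/
def teccDeg (c : Quotient (teccSetoid src tgt)) : ℕ :=
  Nat.card {e : E // IsCutEdge src tgt e ∧
    (Quotient.mk (teccSetoid src tgt) (src e) = c ∨
      Quotient.mk (teccSetoid src tgt) (tgt e) = c)}

/-- `𝔣(G)`: the number of leaves of the forest of two-edge connected components,
single-vertex trees of the forest counting twice. -/
def frak : ℕ :=
  Nat.card {c : Quotient (teccSetoid src tgt) // teccDeg src tgt c = 1} +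
    2 * Nat.card {c : Quotient (teccSetoid src tgt) // teccDeg src tgt c = 0}

end Graph

/-! ### Graph monomials -/

/-- A graph monomial: a finite directed multigraph with two roots and edges
labelled by a family index in `Fin L` and an index in `K`.  (Connectedness is
required separately via `IsConnectedGraph`.) -/
structure GraphMonomial (L : ℕ) (K : Type) where
  V : Type
  E : Type
  fintV : Fintype V
  fintE : Fintype E
  src : E → V
  tgt : E → V
  vin : V
  vout : V
  labL : E → Fin L
  labK : E → K

attribute [instance] GraphMonomial.fintV GraphMonomial.fintE

namespace GraphMonomial

variable {L : ℕ} {K : Type} (g : GraphMonomial L K)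

/-- Evaluation of a graph monomial in a collection of matrices. -/
def eval {N : ℕ} (A : Fin L → K → Matrix (Fin N) (Fin N) ℂ) :
    Matrix (Fin N) (Fin N) ℂ :=
  Matrix.of fun i j => ∑ φ : g.V → Fin N,
    if φ g.vin = j ∧ φ g.vout = i then
      ∏ e : g.E, A (g.labL e) (g.labK e) (φ (g.tgt e)) (φ (g.src e))
    else 0

/-- The starting vertex of a step `(e, b)`: `e` traversed forward if `b = true`,
backward otherwise. -/
def stepSrc (s : g.E × Bool) : g.V := if s.2 then g.src s.1 else g.tgt s.1

/-- The ending vertex of a step. -/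
def stepTgt (s : g.E × Bool) : g.V := if s.2 then g.tgt s.1 else g.src s.1

/-- A simple cycle of the underlying undirected multigraph: a nonempty cyclic
sequence of steps with pairwise distinct edges and pairwise distinct vertices. -/
def IsSimpleCycle (c : List (g.E × Bool)) : Prop :=
  ∃ h : c ≠ [],
    (∀ i : Fin c.length,
      g.stepTgt (c.get i) =
        g.stepSrc (c.get ⟨((i : ℕ) + 1) % c.length,
          Nat.mod_lt _ (List.length_pos_iff.mpr h)⟩)) ∧
    (c.map Prod.fst).Nodup ∧ (c.map g.stepSrc).Nodup

/-- A cycle is directed when it traverses all its edges consistently with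
their orientations (one way or the other). -/
def IsDirectedCycleList (c : List (g.E × Bool)) : Prop :=
  (∀ s ∈ c, s.2 = true) ∨ (∀ s ∈ c, s.2 = false)

/-- `S` is the edge set of some simple cycle. -/
def IsCycleEdgeSet (S : Finset g.E) : Prop :=
  ∃ c, g.IsSimpleCycle c ∧ (c.map Prod.fst).toFinset = S

/-- The underlying graph is an oriented cactus: it is connected, every simple
cycle is directed, and every edge belongs to exactly one simple cycle. -/
def IsOrientedCactus : Prop :=
  IsConnectedGraph g.src g.tgt ∧
  (∀ c, g.IsSimpleCycle c → g.IsDirectedCycleList c) ∧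
  (∀ e : g.E, ∃! S : Finset g.E, g.IsCycleEdgeSet S ∧ e ∈ S)

/-- A cactus-type monomial: an oriented cactus whose input and output coincide. -/
def IsCactusType : Prop := g.vin = g.vout ∧ g.IsOrientedCactus

/-- A member of `ℱ`: a directed simple path (oriented from the input, at the far
right, to the output, at the far left) with oriented cacti attached to the
vertices of the path (the root of each cactus being a path vertex). -/
def IsPathCactusType : Prop :=
  IsConnectedGraph g.src g.tgt ∧
  ∃ (d : ℕ) (v : Fin (d + 1) → g.V) (f : Fin d → g.E),
    Function.Injective v ∧ Function.Injective f ∧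
    (∀ j : Fin d, g.src (f j) = v j.succ ∧ g.tgt (f j) = v j.castSucc) ∧
    g.vin = v (Fin.last d) ∧ g.vout = v 0 ∧
    (∀ c, g.IsSimpleCycle c → g.IsDirectedCycleList c ∧ ∀ s ∈ c, s.1 ∉ Set.range f) ∧
    (∀ e : g.E, e ∉ Set.range f →
      ∃! S : Finset g.E, g.IsCycleEdgeSet S ∧ e ∈ S) ∧
    (∀ w : g.V, ∃! j : Fin (d + 1), reachOn g.src g.tgt (Set.range f) w (v j))

end GraphMonomial
/-! ### Random matrices, expectations, test graphs -/

/-- The entries of the random matrix `X` are measurable. -/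
def EntriesMeasurable {N : ℕ} {Ω : Type} [MeasurableSpace Ω]
    (X : Ω → Matrix (Fin N) (Fin N) ℂ) : Prop :=
  ∀ i j, Measurable fun ω => X ω i j

/-- The entries of the random matrix `X` are essentially bounded. -/
def EntriesBounded {N : ℕ} {Ω : Type} [MeasurableSpace Ω] (μ : Measure Ω)
    (X : Ω → Matrix (Fin N) (Fin N) ℂ) : Prop :=
  ∃ C : ℝ, ∀ᵐ ω ∂μ, ∀ i j, ‖X ω i j‖ ≤ C

/-- The σ-algebra generated by the entries of the matrices of a family. -/
def famSigma {N : ℕ} {Ω K : Type} [MeasurableSpace Ω]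
    (A : K → Ω → Matrix (Fin N) (Fin N) ℂ) : MeasurableSpace Ω :=
  ⨆ k : K, ⨆ i : Fin N, ⨆ j : Fin N,
    MeasurableSpace.comap (fun ω => A k ω i j) inferInstance

/-- Permutation invariance of a family of `N × N` random matrices. -/
def PermInvariant {N : ℕ} {Ω K : Type} [MeasurableSpace Ω] (μ : Measure Ω)
    (A : K → Ω → Matrix (Fin N) (Fin N) ℂ) : Prop :=
  ∀ σ : Equiv.Perm (Fin N),
    Measure.map (fun ω => fun (k : K) (i j : Fin N) => A k ω (σ i) (σ j)) μ =
      Measure.map (fun ω => fun (k : K) (i j : Fin N) => A k ω i j) μ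

/-- A test graph with matrix-valued edge labels. -/
structure TestGraph (N : ℕ) (Ω : Type) where
  V : Type
  E : Type
  fintV : Fintype V
  fintE : Fintype E
  src : E → V
  tgt : E → V
  lab : E → Ω → Matrix (Fin N) (Fin N) ℂ

attribute [instance] TestGraph.fintV TestGraph.fintE

namespace TestGraph

variable {N : ℕ} {Ω : Type} [MeasurableSpace Ω]

/-- Number of connected components `c(T)` of a test graph. -/
def ncc (T : TestGraph N Ω) : ℕ := ncomp T.src T.tgt

/-- The (unnormalized) trace observable of a test graph. -/
def tauInner (T : TestGraph N Ω) (ω : Ω) : ℂ :=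
  ∑ φ : T.V → Fin N, ∏ e : T.E, T.lab e ω (φ (T.tgt e)) (φ (T.src e))

/-- The (unnormalized) injective trace observable of a test graph. -/
def tau0Inner (T : TestGraph N Ω) (ω : Ω) : ℂ :=
  ∑ φ : T.V → Fin N,
    if Function.Injective φ then ∏ e : T.E, T.lab e ω (φ (T.tgt e)) (φ (T.src e)) else 0

/-- `τ_N[T]`. -/
def tau (T : TestGraph N Ω) (μ : Measure Ω) : ℂ :=
  ((N : ℂ) ^ T.ncc)⁻¹ * ∫ ω, T.tauInner ω ∂μ

/-- `τ⁰_N[T]`. -/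
def tau0 (T : TestGraph N Ω) (μ : Measure Ω) : ℂ :=
  ((N : ℂ) ^ T.ncc)⁻¹ * ∫ ω, T.tau0Inner ω ∂μ

/-- The quotient test graph `T^π` associated with a partition `π` of the
vertices of `T`. -/
def quot (T : TestGraph N Ω) (π : Setoid T.V) : TestGraph N Ω where
  V := Quotient π
  E := T.E
  fintV := @Quotient.fintype _ T.fintV π fun _ _ => Classical.propDecidable _
  fintE := T.fintE
  src := fun e => Quotient.mk π (T.src e)
  tgt := fun e => Quotient.mk π (T.tgt e)
  lab := T.lab

end TestGraph

/-- Monomial `D₀ X_{k(1)} D₁ ⋯ X_{k(d)} D_d` evaluated in a family of matrices: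
the coefficients are given as an arbitrary function `D : ℕ → Matrix`. -/
def monomialEval {K : Type} {N : ℕ} (A : K → Matrix (Fin N) (Fin N) ℂ)
    (dd : ℕ) (kk : ℕ → K) (D : ℕ → Matrix (Fin N) (Fin N) ℂ) :
    Matrix (Fin N) (Fin N) ℂ :=
  D 0 * (List.ofFn fun j : Fin dd => A (kk ((j : ℕ) + 1)) * D ((j : ℕ) + 1)).prod

/-- The centered product `(M₁ - ΔM₁)(M₂ - ΔM₂)⋯(Mₙ - ΔMₙ)`. -/
def centeredProd {N n : ℕ} (M : Fin n → Matrix (Fin N) (Fin N) ℂ) :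
    Matrix (Fin N) (Fin N) ℂ :=
  (List.ofFn fun i : Fin n => M i - dproj (M i)).prod

/-- Mutual independence of the families `A 1, …, A L` of random matrices. -/
def IndepFamilies {Ω K : Type} {L : ℕ} [MeasurableSpace Ω] (μ : Measure Ω)
    (A : (N : ℕ) → Fin L → K → Ω → Matrix (Fin N) (Fin N) ℂ) : Prop :=
  ∀ N : ℕ, ProbabilityTheory.iIndep (fun ℓ : Fin L => famSigma (A N ℓ)) μ

/-- Uniform boundedness, in operator norm, of families of random matrices. -/
def UnifOpNormBound {Ω K : Type} {L : ℕ} [MeasurableSpace Ω] (μ : Measure Ω)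
    (A : (N : ℕ) → Fin L → K → Ω → Matrix (Fin N) (Fin N) ℂ) : Prop :=
  ∃ C : ℝ, ∀ (N : ℕ) (ℓ : Fin L) (k : K), ∀ᵐ ω ∂μ, matOpNorm (A N ℓ k ω) ≤ C

/-- The growth bound (MS) for the family `A · ℓ`:
for all graph monomials `g₁, …, gₘ` labelled in the single family `ℓ` and having
equal input and output, `E[∏ᵢ Tr gᵢ(A_N)] = O(N^{Σᵢ 𝔣(gᵢ)/2})` as `N → ∞`. -/
def MSBound {Ω K : Type} {L : ℕ} [MeasurableSpace Ω] (μ : Measure Ω)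
    (A : (N : ℕ) → Fin L → K → Ω → Matrix (Fin N) (Fin N) ℂ) (ℓ : Fin L) : Prop :=
  ∀ (m : ℕ), 1 ≤ m → ∀ gs : Fin m → GraphMonomial L K,
    (∀ i : Fin m, IsConnectedGraph (gs i).src (gs i).tgt ∧
      (∀ e, (gs i).labL e = ℓ) ∧ (gs i).vin = (gs i).vout) →
    (fun N : ℕ => ∫ ω, ∏ i : Fin m,
        Matrix.trace ((gs i).eval fun ℓ' k => A N ℓ' k ω) ∂μ)
      =O[atTop] fun N : ℕ => (N : ℝ) ^ ((∑ i : Fin m, (frak (gs i).src (gs i).tgt : ℝ)) / 2)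
/-- The monomial `g₀(A) X_{k(1)} g₁(A) ⋯ X_{k(d)} g_d(A)` with graph-monomial
coefficients, evaluated at the family `A ℓi`. -/
def cactusMonomialEval {L : ℕ} {K : Type} {N : ℕ}
    (A : Fin L → K → Matrix (Fin N) (Fin N) ℂ) (ℓi : Fin L) (dd : ℕ)
    (kk : ℕ → K) (gg : ℕ → GraphMonomial L K) : Matrix (Fin N) (Fin N) ℂ :=
  (gg 0).eval A *
    (List.ofFn fun j : Fin dd =>
      A ℓi (kk ((j : ℕ) + 1)) * (gg ((j : ℕ) + 1)).eval A).prod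
/-! ### The test graph `T` built from the monomials `t_1, …, t_n` -/

section Construction

variable {L : ℕ} {K : Type}

/-- Cyclic successor in `Fin n`. -/
def nxt {n : ℕ} (i : Fin n) : Fin n := ⟨((i : ℕ) + 1) % n, Nat.mod_lt _ i.pos⟩

/-- Vertices of the disjoint union of the graph monomials `t_1, …, t_n`:
for each `i`, the path vertices of `t_i` are the roots of the attached cacti
`g_{0,i}, …, g_{d_i,i}`. -/
def BigV (n : ℕ) (d : Fin n → ℕ) (g : Fin n → ℕ → GraphMonomial L K) : Type :=
  Σ i : Fin n, Σ j : Fin (d i + 1), (g i (j : ℕ)).V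

instance (n : ℕ) (d : Fin n → ℕ) (g : Fin n → ℕ → GraphMonomial L K) :
    Fintype (BigV n d g) := by
  unfold BigV; infer_instance

/-- Edges: the edges of the cacti, plus the path edges (the edge `(i, j)` goes
from the path vertex `u_{i,j+1}` to `u_{i,j}` and carries the label
`(ℓ_i, k_i(j+1))`). -/
def BigE (n : ℕ) (d : Fin n → ℕ) (g : Fin n → ℕ → GraphMonomial L K) : Type :=
  (Σ i : Fin n, Σ j : Fin (d i + 1), (g i (j : ℕ)).E) ⊕ (Σ i : Fin n, Fin (d i))

instance (n : ℕ) (d : Fin n → ℕ) (g : Fin n → ℕ → GraphMonomial L K) :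
    Fintype (BigE n d g) := by
  unfold BigE; infer_instance

/-- The path vertex `u_{i,j}`, i.e. the root of the cactus `g_{j,i}`. -/
def pathVtx (n : ℕ) (d : Fin n → ℕ) (g : Fin n → ℕ → GraphMonomial L K)
    (i : Fin n) (j : Fin (d i + 1)) : BigV n d g :=
  ⟨i, j, (g i (j : ℕ)).vin⟩

/-- The input vertex of `t_i`. -/
def inVtx (n : ℕ) (d : Fin n → ℕ) (g : Fin n → ℕ → GraphMonomial L K)
    (i : Fin n) : BigV n d g :=
  pathVtx n d g i (Fin.last (d i))

/-- The output vertex of `t_i`. -/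
def outVtx (n : ℕ) (d : Fin n → ℕ) (g : Fin n → ℕ → GraphMonomial L K)
    (i : Fin n) : BigV n d g :=
  pathVtx n d g i 0

/-- The setoid identifying, for each `i` (cyclically), the input of `t_i` with
the output of `t_{i+1}`. -/
def glueSetoid (n : ℕ) (d : Fin n → ℕ) (g : Fin n → ℕ → GraphMonomial L K) :
    Setoid (BigV n d g) :=
  ⟨Relation.EqvGen fun x y =>
      ∃ i : Fin n, x = inVtx n d g i ∧ y = outVtx n d g (nxt i),
   Relation.EqvGen.is_equivalence _⟩

/-- Source map of the glued test graph `T`. -/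
def bigSrc (n : ℕ) (d : Fin n → ℕ) (g : Fin n → ℕ → GraphMonomial L K) :
    BigE n d g → Quotient (glueSetoid n d g) := fun e =>
  match e with
  | Sum.inl ⟨i, j, e'⟩ =>
      Quotient.mk (glueSetoid n d g) ⟨i, j, (g i (j : ℕ)).src e'⟩
  | Sum.inr ⟨i, j⟩ =>
      Quotient.mk (glueSetoid n d g) (pathVtx n d g i j.succ)

/-- Target map of the glued test graph `T`. -/
def bigTgt (n : ℕ) (d : Fin n → ℕ) (g : Fin n → ℕ → GraphMonomial L K) :
    BigE n d g → Quotient (glueSetoid n d g) := fun e =>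
  match e with
  | Sum.inl ⟨i, j, e'⟩ =>
      Quotient.mk (glueSetoid n d g) ⟨i, j, (g i (j : ℕ)).tgt e'⟩
  | Sum.inr ⟨i, j⟩ =>
      Quotient.mk (glueSetoid n d g) (pathVtx n d g i j.castSucc)

/-- The family index (color) carried by each edge of `T`. -/
def bigCol (n : ℕ) (ℓv : Fin n → Fin L) (d : Fin n → ℕ)
    (g : Fin n → ℕ → GraphMonomial L K) : BigE n d g → Fin L := fun e =>
  match e with
  | Sum.inl ⟨i, j, e'⟩ => (g i (j : ℕ)).labL e'
  | Sum.inr ⟨i, _⟩ => ℓv i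

/-- The vertex `v_i` of `T` (the class of the input of `t_i`). -/
def vCls (n : ℕ) (d : Fin n → ℕ) (g : Fin n → ℕ → GraphMonomial L K)
    (i : Fin n) : Quotient (glueSetoid n d g) :=
  Quotient.mk (glueSetoid n d g) (inVtx n d g i)

/-- The test graph `T`, with the matrix `A_{N,ℓ}^{(k)}` assigned to each edge
labelled `(ℓ, k)`. -/
def bigTG (n : ℕ) (ℓv : Fin n → Fin L) (d : Fin n → ℕ) (kv : Fin n → ℕ → K)
    (g : Fin n → ℕ → GraphMonomial L K) {Ω : Type} (N : ℕ)
    (A : Fin L → K → Ω → Matrix (Fin N) (Fin N) ℂ) : TestGraph N Ω where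
  V := Quotient (glueSetoid n d g)
  E := BigE n d g
  fintV := @Quotient.fintype _ inferInstance (glueSetoid n d g)
    fun _ _ => Classical.propDecidable _
  fintE := inferInstance
  src := bigSrc n d g
  tgt := bigTgt n d g
  lab := fun e =>
    match e with
    | Sum.inl ⟨i, j, e'⟩ => fun ω => A ((g i (j : ℕ)).labL e') ((g i (j : ℕ)).labK e') ω
    | Sum.inr ⟨i, j⟩ => fun ω => A (ℓv i) (kv i ((j : ℕ) + 1)) ω

end Construction
/-! ### The graph of colored components -/

section GCC

variable {V E : Type} (src tgt : E → V) {L : ℕ} (col : E → Fin L)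

/-- Connectivity using only edges of color `ℓ`. -/
def colorSetoid (ℓ : Fin L) : Setoid V :=
  connSetoid src tgt {e | col e ≠ ℓ}

/-- The colored components: maximal connected subgraphs all of whose edges
have one single color.  Such a component is encoded by its color together
with the corresponding class of vertices (which is required to contain at
least one edge of that color). -/
def ColoredComp : Type :=
  {p : Σ ℓ : Fin L, Quotient (colorSetoid src tgt col ℓ) //
    ∃ e, col e = p.1 ∧ Quotient.mk (colorSetoid src tgt col p.1) (src e) = p.2}

/-- Membership of a vertex in a colored component. -/
def memCC (v : V) (S : ColoredComp src tgt col) : Prop :=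
  Quotient.mk (colorSetoid src tgt col S.1.1) v = S.1.2

/-- The graph of colored components `GCC`: the undirected bipartite graph on
the colored components and the vertices, a vertex being joined to each colored
component it belongs to. -/
def gccGraph : SimpleGraph (ColoredComp src tgt col ⊕ V) where
  Adj x y :=
    (∃ S v, x = Sum.inl S ∧ y = Sum.inr v ∧ memCC src tgt col v S) ∨
    (∃ S v, x = Sum.inr v ∧ y = Sum.inl S ∧ memCC src tgt col v S)
  symm := by
    refine ⟨?_⟩
    rintro x y (⟨S, v, hx, hy, hm⟩ | ⟨S, v, hx, hy, hm⟩)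
    · exact Or.inr ⟨S, v, hy, hx, hm⟩
    · exact Or.inl ⟨S, v, hy, hx, hm⟩
  loopless := by
    refine ⟨?_⟩
    rintro x (⟨S, v, rfl, hy, hm⟩ | ⟨S, v, rfl, hy, hm⟩) <;> simp at hy

end GCC


/-! ### Non-bridge degrees -/

/-- The spanning subgraph of non-bridge edges. -/
def nonBridge {W : Type} (Γ : SimpleGraph W) : SimpleGraph W where
  Adj x y := Γ.Adj x y ∧ ¬ Γ.IsBridge s(x, y)
  symm := ⟨fun x y h => ⟨h.1.symm, by rw [Sym2.eq_swap]; exact h.2⟩⟩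
  loopless := ⟨fun x h => Γ.loopless.irrefl x h.1⟩

lemma nonBridge_degree_ne_one {W : Type} [Fintype W] (Γ : SimpleGraph W) (x : W) :
    (nonBridge Γ).degree x ≠ 1 := by
  intro h1
  obtain ⟨y, hy, huniq⟩ := SimpleGraph.degree_eq_one_iff_existsUnique_adj.mp h1
  have h2 := hy.2
  rw [SimpleGraph.isBridge_iff_forall_cycle_notMem (show s(x, y) ∈ Γ.edgeSet from hy.1)] at h2
  push Not at h2
  obtain ⟨u, p, hp, hxy⟩ := h2
  have hx : x ∈ p.support := p.fst_mem_support_of_mem_edges hxy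
  have h3 := hp.ncard_neighborSet_toSubgraph_eq_two hx
  have hsub : p.toSubgraph.neighborSet x ⊆ {y} := by
    intro z hz
    have hz' : s(x, z) ∈ p.edges := by
      rw [← SimpleGraph.Walk.mem_edges_toSubgraph]; exact hz
    exact huniq z ⟨hz.adj_sub, fun hb => hb.notMem_edges_of_isCycle hp hz'⟩
  have h4 := Set.ncard_le_ncard hsub
  rw [Set.ncard_singleton] at h4
  omega

/-- In a finite connected graph having a cycle, the isolated vertices of the graph of
non-bridge edges are at most as many as the bridges. -/
lemma card_nonBridge_isolated_le {W : Type} [Fintype W] (Γ : SimpleGraph W)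
    (hc : Γ.Connected) (hna : ¬ Γ.IsAcyclic) :
    (Finset.univ.filter fun x => (nonBridge Γ).degree x = 0).card ≤
      (Γ.edgeFinset \ (nonBridge Γ).edgeFinset).card := by
  rw [SimpleGraph.isAcyclic_iff_forall_adj_isBridge] at hna
  push Not at hna
  obtain ⟨r, r', hrr, hnb⟩ := hna
  have hr : (nonBridge Γ).degree r ≠ 0 := by
    rw [← Nat.pos_iff_ne_zero, SimpleGraph.degree_pos_iff_exists_adj]
    exact ⟨r', hrr, hnb⟩
  have hpar : ∀ x, (nonBridge Γ).degree x = 0 → ∃ y, Γ.Adj x y ∧ Γ.dist r x = Γ.dist r y + 1 := by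
    intro x hx
    have hne : x ≠ r := by rintro rfl; exact hr hx
    obtain ⟨p, hp⟩ := hc.exists_walk_length_eq_dist x r
    cases p with
    | nil => exact absurd rfl hne
    | @cons _ y _ h q =>
      refine ⟨y, h, ?_⟩
      have h1 : Γ.dist y r ≤ q.length := SimpleGraph.dist_le q
      have h2 : Γ.dist x r ≤ Γ.dist y r + 1 := by
        have := hc.dist_triangle (u := x) (v := y) (w := r)
        rw [SimpleGraph.dist_eq_one_iff_adj.mpr h] at this
        omega
      rw [SimpleGraph.Walk.length_cons] at hp
      rw [SimpleGraph.dist_comm, SimpleGraph.dist_comm (u := r)]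
      omega
  choose! par hpar using hpar
  refine Finset.card_le_card_of_injOn (fun x => s(x, par x)) ?_ ?_
  · intro x hx
    have hx0 : (nonBridge Γ).degree x = 0 := by simpa using hx
    simp only [Finset.coe_sdiff, Set.mem_sdiff, SimpleGraph.coe_edgeFinset,
      SimpleGraph.mem_edgeSet]
    refine ⟨(hpar x hx0).1, fun h => ?_⟩
    have := (SimpleGraph.degree_pos_iff_exists_adj (nonBridge Γ) x).mpr ⟨_, h⟩
    omega
  · intro x hx y hy hxy
    have hx0 := (hpar x (by simpa using hx)).2
    have hy0 := (hpar y (by simpa using hy)).2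
    simp only [Sym2.eq_iff] at hxy
    rcases hxy with h | ⟨h, h'⟩
    · exact h.1
    · rw [h'] at hx0
      rw [← h] at hy0
      omega

/-- In a finite connected graph having a cycle, the sum of the non-bridge degrees, each
rounded up to at least `2`, is at most twice the number of edges. -/
lemma sum_max_two_nonBridge_degree_le {W : Type} [Fintype W] (Γ : SimpleGraph W)
    (hc : Γ.Connected) (hna : ¬ Γ.IsAcyclic) :
    ∑ x, max 2 ((nonBridge Γ).degree x) ≤ 2 * Γ.edgeFinset.card := by
  have h1 : ∀ x, max 2 ((nonBridge Γ).degree x) =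
      (nonBridge Γ).degree x + if (nonBridge Γ).degree x = 0 then 2 else 0 := by
    intro x
    have := nonBridge_degree_ne_one Γ x
    split_ifs <;> omega
  have hle : nonBridge Γ ≤ Γ := fun x y h => h.1
  have h2 := Finset.card_sdiff_add_card_eq_card (SimpleGraph.edgeFinset_subset_edgeFinset.mpr hle)
  have h3 := card_nonBridge_isolated_le Γ hc hna
  rw [Finset.sum_congr rfl fun x _ => h1 x, Finset.sum_add_distrib,
    SimpleGraph.sum_degrees_eq_twice_card_edges, ← Finset.sum_filter, Finset.sum_const,
    smul_eq_mul]
  omega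

/-! ### The graph of colored components of a graph without cut edges -/

section GCCLemmas

variable {V E : Type} {src tgt : E → V}

lemma reachOn_symm {F : Set E} {a b : V} (h : reachOn src tgt F a b) : reachOn src tgt F b a :=
  (connSetoid src tgt F).symm h

lemma reachOn_edge {F : Set E} {e : E} (he : e ∉ F) : reachOn src tgt F (src e) (tgt e) :=
  Relation.ReflTransGen.single ⟨e, he, Or.inl ⟨rfl, rfl⟩⟩

variable {L : ℕ} {col : E → Fin L}

instance [Finite V] : Finite (ColoredComp src tgt col) := by
  unfold ColoredComp; infer_instance

instance [Finite V] : Fintype (ColoredComp src tgt col) := Fintype.ofFinite _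

variable (src tgt col) in
/-- The colored component containing a given edge. -/
def compOfEdge (e : E) : ColoredComp src tgt col :=
  ⟨⟨col e, Quotient.mk _ (src e)⟩, e, rfl, rfl⟩

lemma memCC_src (e : E) : memCC src tgt col (src e) (compOfEdge src tgt col e) := rfl

lemma memCC_tgt (e : E) : memCC src tgt col (tgt e) (compOfEdge src tgt col e) :=
  Quotient.sound (reachOn_symm (reachOn_edge (fun h => h rfl)))

lemma compOfEdge_eq {e : E} {S : ColoredComp src tgt col} (hc : col e = S.1.1)
    (hm : memCC src tgt col (src e) S) : compOfEdge src tgt col e = S := by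
  obtain ⟨⟨ℓ, q⟩, hS⟩ := S
  simp only at hc
  subst hc
  simp only [memCC] at hm
  subst hm
  rfl

lemma gccGraph_adj {S : ColoredComp src tgt col} {v : V} :
    (gccGraph src tgt col).Adj (Sum.inl S) (Sum.inr v) ↔ memCC src tgt col v S := by
  simp [gccGraph]

lemma gccGraph_connected [Nonempty V] (hconn : IsConnectedGraph src tgt) :
    (gccGraph src tgt col).Connected := by
  have hVV : ∀ a b, (gccGraph src tgt col).Reachable (Sum.inr a) (Sum.inr b) := by
    intro a b
    induction hconn a b with
    | refl => exact SimpleGraph.Reachable.refl _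
    | tail _ h ih =>
      obtain ⟨e, -, ⟨rfl, rfl⟩ | ⟨rfl, rfl⟩⟩ := h
      · exact ih.trans ((gccGraph_adj.mpr (memCC_src e)).symm.reachable.trans
          (gccGraph_adj.mpr (memCC_tgt e)).reachable)
      · exact ih.trans ((gccGraph_adj.mpr (memCC_tgt e)).symm.reachable.trans
          (gccGraph_adj.mpr (memCC_src e)).reachable)
  obtain ⟨v₀⟩ := ‹Nonempty V›
  have h0 : ∀ x, (gccGraph src tgt col).Reachable x (Sum.inr v₀) := by
    rintro (S | v)
    · obtain ⟨e, -, he⟩ := S.2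
      exact (gccGraph_adj.mpr he).reachable.trans (hVV _ _)
    · exact hVV _ _
  exact { preconnected := fun x y => (h0 x).trans (h0 y).symm, nonempty := ⟨Sum.inr v₀⟩ }

/-- In a graph without cut edges, a set of vertices of a colored component which is left by
exactly one edge of that component contains a vertex joined to it by a non-bridge. -/
lemma exists_nonBridge_adj (h2 : ∀ e, reachOn src tgt {e} (src e) (tgt e))
    (S : ColoredComp src tgt col) (W : Set V) (hWS : ∀ v ∈ W, memCC src tgt col v S) (e₀ : E)
    (hS : compOfEdge src tgt col e₀ = S) (hcross : ¬ (src e₀ ∈ W ↔ tgt e₀ ∈ W))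
    (honly : ∀ e, compOfEdge src tgt col e = S → ¬ (src e ∈ W ↔ tgt e ∈ W) → e = e₀) :
    ∃ v ∈ W, (nonBridge (gccGraph src tgt col)).Adj (Sum.inl S) (Sum.inr v) := by
  obtain ⟨a, b, ha, hb, hbS, hab⟩ : ∃ a b, a ∈ W ∧ b ∉ W ∧ memCC src tgt col b S ∧
      reachOn src tgt {e₀} a b := by
    by_cases h : src e₀ ∈ W
    · exact ⟨src e₀, tgt e₀, h, fun h' => hcross (by simp [h, h']), hS ▸ memCC_tgt e₀, h2 e₀⟩
    · exact ⟨tgt e₀, src e₀, by tauto, h, hS ▸ memCC_src e₀, reachOn_symm (h2 e₀)⟩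
  by_contra hcon
  push Not at hcon
  have hbr : ∀ v ∈ W, (gccGraph src tgt col).IsBridge s(Sum.inl S, Sum.inr v) := by
    intro v hv
    by_contra h
    exact hcon v hv ⟨gccGraph_adj.mpr (hWS v hv), h⟩
  let R : V → V → Prop := fun x y => ∃ S', S' ≠ S ∧ memCC src tgt col x S' ∧ memCC src tgt col y S'
  have key : ∀ v ∈ W, ∀ x, Relation.ReflTransGen R v x → memCC src tgt col x S → x = v := by
    intro v hv x hvx hx
    by_contra hne
    have hadj : ∀ S' y, memCC src tgt col y S' → ¬ (S' = S ∧ y = v) →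
        ((gccGraph src tgt col).deleteEdges {s(Sum.inl S, Sum.inr v)}).Adj
          (Sum.inl S') (Sum.inr y) := by
      intro S' y hm hn
      rw [SimpleGraph.deleteEdges_adj]
      refine ⟨gccGraph_adj.mpr hm, fun h => hn ?_⟩
      simpa using h
    have hreach : ((gccGraph src tgt col).deleteEdges {s(Sum.inl S, Sum.inr v)}).Reachable
        (Sum.inr v) (Sum.inr x) := by
      clear hne hx
      induction hvx with
      | refl => exact SimpleGraph.Reachable.refl _
      | tail _ h ih =>
        obtain ⟨S', hS', h1, h2⟩ := h
        exact ih.trans ((hadj S' _ h1 (by tauto)).symm.reachable.trans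
          (hadj S' _ h2 (by tauto)).reachable)
    exact hbr v hv ((hadj S x hx (by tauto)).reachable.trans hreach.symm)
  have hstep : ∀ e x y, e ≠ e₀ → (src e = x ∧ tgt e = y ∨ src e = y ∧ tgt e = x) →
      (∃ v ∈ W, Relation.ReflTransGen R v x) → ∃ v ∈ W, Relation.ReflTransGen R v y := by
    rintro e x y hne hxy ⟨v, hv, hvx⟩
    have hm : memCC src tgt col x (compOfEdge src tgt col e) ∧
        memCC src tgt col y (compOfEdge src tgt col e) := by
      rcases hxy with ⟨rfl, rfl⟩ | ⟨rfl, rfl⟩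
      · exact ⟨memCC_src e, memCC_tgt e⟩
      · exact ⟨memCC_tgt e, memCC_src e⟩
    by_cases hSe : compOfEdge src tgt col e = S
    · obtain rfl := key v hv x hvx (hSe ▸ hm.1)
      by_cases hy : y ∈ W
      · exact ⟨y, hy, Relation.ReflTransGen.refl⟩
      · refine absurd (honly e hSe ?_) hne
        rcases hxy with ⟨rfl, rfl⟩ | ⟨rfl, rfl⟩ <;> tauto
    · exact ⟨v, hv, hvx.tail ⟨_, hSe, hm.1, hm.2⟩⟩
  have hall : ∃ v ∈ W, Relation.ReflTransGen R v b := by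
    clear hb hbS
    induction hab with
    | refl => exact ⟨a, ha, Relation.ReflTransGen.refl⟩
    | tail _ h ih =>
      obtain ⟨e, he, hxy⟩ := h
      exact hstep e _ _ he hxy ih
  obtain ⟨v, hv, hvb⟩ := hall
  exact hb (key v hv b hvb hbS ▸ hv)

/-- Bound on the total weight of a packing of vertex sets each of which is left by at most one
edge of color `ℓ`. -/
lemma packing_le [Fintype V] (h2 : ∀ e, reachOn src tgt {e} (src e) (tgt e)) (ℓ : Fin L)
    {I : Type} [Fintype I] (W : I → Set V) (hdisj : ∀ i j v, v ∈ W i → v ∈ W j → i = j)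
    (deg : I → ℕ)
    (hone : ∀ i e, col e = ℓ → ¬ (src e ∈ W i ↔ tgt e ∈ W i) → deg i = 1)
    (huniq : ∀ i e e', col e = ℓ → ¬ (src e ∈ W i ↔ tgt e ∈ W i) → col e' = ℓ →
      ¬ (src e' ∈ W i ↔ tgt e' ∈ W i) → e = e')
    (hne : ∀ i, ∃ v ∈ W i, ∃ S : ColoredComp src tgt col, S.1.1 = ℓ ∧ memCC src tgt col v S) :
    ∑ i, (2 - deg i) ≤ ∑ S : ColoredComp src tgt col with S.1.1 = ℓ,
      max 2 ((nonBridge (gccGraph src tgt col)).degree (Sum.inl S)) := by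
  have hex : ∀ i, ∃ S : ColoredComp src tgt col, S.1.1 = ℓ ∧
      ((∀ v, memCC src tgt col v S → v ∈ W i) ∨ (deg i = 1 ∧ ∃ v ∈ W i, memCC src tgt col v S ∧
        (nonBridge (gccGraph src tgt col)).Adj (Sum.inl S) (Sum.inr v))) := by
    intro i
    by_cases hcr : ∃ e, col e = ℓ ∧ ¬ (src e ∈ W i ↔ tgt e ∈ W i)
    · obtain ⟨e, he, hcross⟩ := hcr
      refine ⟨compOfEdge src tgt col e, he, Or.inr ⟨hone i e he hcross, ?_⟩⟩
      obtain ⟨v, hv, h⟩ := exists_nonBridge_adj h2 (compOfEdge src tgt col e)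
        (W i ∩ {v | memCC src tgt col v (compOfEdge src tgt col e)}) (fun v hv => hv.2) e rfl
        (by
          simpa only [Set.mem_inter_iff, Set.mem_ofPred_eq, memCC_src, memCC_tgt, and_true]
            using hcross)
        (by
          intro e' he' hcr'
          have h1 : memCC src tgt col (src e') (compOfEdge src tgt col e) := he' ▸ memCC_src e'
          have h3 : memCC src tgt col (tgt e') (compOfEdge src tgt col e) := he' ▸ memCC_tgt e'
          simp only [Set.mem_inter_iff, Set.mem_ofPred_eq, h1, h3, and_true] at hcr'
          have hc' : col e' = col e := congrArg (fun S => S.1.1) he'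
          exact huniq i e' e (hc'.trans he) hcr' he hcross)
      exact ⟨v, hv.1, hv.2, h⟩
    · push Not at hcr
      obtain ⟨v, hv, S, hS, hvS⟩ := hne i
      refine ⟨S, hS, Or.inl fun w hw => ?_⟩
      have hr : reachOn src tgt {e | col e ≠ S.1.1} v w := Quotient.exact (hvS.trans hw.symm)
      clear hvS hw
      induction hr with
      | refl => exact hv
      | tail _ h ih =>
        obtain ⟨e, he, hxy⟩ := h
        have he' : col e = ℓ := by
          simp only [ne_eq, Set.mem_ofPred_eq, not_not] at he
          exact he.trans hS
        have := hcr e he'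
        rcases hxy with ⟨rfl, rfl⟩ | ⟨rfl, rfl⟩ <;> tauto
  choose Sf hSf hW using hex
  have hmeet : ∀ i, ∃ v ∈ W i, memCC src tgt col v (Sf i) := by
    intro i
    rcases hW i with h | ⟨-, v, hv, hm, -⟩
    · obtain ⟨e, -, he⟩ := (Sf i).2
      exact ⟨src e, h _ he, he⟩
    · exact ⟨v, hv, hm⟩
  rw [← Finset.sum_fiberwise_of_maps_to (s := Finset.univ)
    (t := Finset.univ.filter fun S : ColoredComp src tgt col => S.1.1 = ℓ) (g := Sf)
    (fun i _ => by simpa using hSf i)]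
  refine Finset.sum_le_sum fun S _ => ?_
  by_cases hfull : ∃ i₀, Sf i₀ = S ∧ ∀ v, memCC src tgt col v S → v ∈ W i₀
  · obtain ⟨i₀, -, hi₀⟩ := hfull
    have hsub : (Finset.univ.filter fun i => Sf i = S) ⊆ {i₀} := by
      intro i hi
      have hi' : Sf i = S := by simpa using hi
      obtain ⟨v, hv, hm⟩ := hmeet i
      rw [Finset.mem_singleton]
      exact hdisj i i₀ v hv (hi₀ v (hi' ▸ hm))
    calc _ ≤ ∑ i ∈ {i₀}, (2 - deg i) := Finset.sum_le_sum_of_subset hsub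
      _ ≤ 2 := by rw [Finset.sum_singleton]; omega
      _ ≤ _ := le_max_left _ _
  · push Not at hfull
    have hadj : ∀ i, Sf i = S → deg i = 1 ∧ ∃ v ∈ W i,
        (nonBridge (gccGraph src tgt col)).Adj (Sum.inl S) (Sum.inr v) := by
      rintro i rfl
      rcases hW i with h | ⟨h, v, hv, -, hm⟩
      · obtain ⟨v, hv, hn⟩ := hfull i rfl
        exact absurd (h v hv) hn
      · exact ⟨h, v, hv, hm⟩
    have : Nonempty V := ⟨src S.2.choose⟩
    choose! hd x hx hxa using hadj
    rw [Finset.sum_congr rfl (g := fun _ => 1) (fun i hi => by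
      rw [hd i (by simpa using hi)]), Finset.sum_const, smul_eq_mul, mul_one]
    refine le_trans ?_ (le_max_right _ _)
    rw [← SimpleGraph.card_neighborFinset_eq_degree]
    refine Finset.card_le_card_of_injOn (fun i => Sum.inr (x i)) ?_ ?_
    · intro i hi
      simpa using hxa i (by simpa using hi)
    · intro i hi j hj hij
      have hij' : x i = x j := Sum.inr_injective hij
      exact hdisj i j (x i) (hx i (by simpa using hi)) (hij' ▸ hx j (by simpa using hj))

variable (src tgt col) in
/-- The vertices incident to an edge of color `ℓ`. -/
def ColorVtx (ℓ : Fin L) : Type := {v : V // ∃ e, col e = ℓ ∧ (src e = v ∨ tgt e = v)}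

instance [Fintype V] (ℓ : Fin L) : Fintype (ColorVtx src tgt col ℓ) := by
  unfold ColorVtx; infer_instance

lemma card_gccGraph_edges_le [Fintype V] :
    (gccGraph src tgt col).edgeFinset.card ≤ ∑ ℓ, Fintype.card (ColorVtx src tgt col ℓ) := by
  rw [← Fintype.card_sigma, ← Finset.card_univ]
  have hmem : ∀ (v : V) (S : ColoredComp src tgt col), memCC src tgt col v S →
      ∃ e, col e = S.1.1 ∧ (src e = v ∨ tgt e = v) := by
    intro v S h
    obtain ⟨e, he, hm⟩ := S.2
    have hr : reachOn src tgt {e | col e ≠ S.1.1} (src e) v := Quotient.exact (hm.trans h.symm)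
    rcases Relation.ReflTransGen.cases_tail hr with h' | ⟨y, -, e', he', h' | h'⟩
    · exact ⟨e, he, Or.inl h'.symm⟩
    · exact ⟨e', by simpa using he', Or.inr h'.2⟩
    · exact ⟨e', by simpa using he', Or.inl h'.1⟩
  let f : (Σ ℓ, ColorVtx src tgt col ℓ) → Sym2 (ColoredComp src tgt col ⊕ V) := fun p =>
    s(Sum.inl (compOfEdge src tgt col p.2.2.choose), Sum.inr p.2.1)
  refine Finset.card_le_card_of_surjOn f ?_
  intro z hz
  have key : ∀ (S : ColoredComp src tgt col) v, memCC src tgt col v S →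
      ∃ p, f p = s(Sum.inl S, Sum.inr v) := by
    intro S v hm
    let p : Σ ℓ, ColorVtx src tgt col ℓ := ⟨S.1.1, v, hmem v S hm⟩
    refine ⟨p, ?_⟩
    obtain ⟨hc, hv⟩ := p.2.2.choose_spec
    have hS : compOfEdge src tgt col p.2.2.choose = S := by
      refine compOfEdge_eq hc ?_
      rcases hv with hv | hv
      · rw [hv]; exact hm
      · refine Eq.trans (Quotient.sound ?_) hm
        change reachOn _ _ _ _ _
        conv => arg 5; rw [show v = p.2.1 from rfl, ← hv]
        exact reachOn_edge (by simpa using hc)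
    change s(Sum.inl (compOfEdge src tgt col p.2.2.choose), Sum.inr v) = _
    rw [hS]
  induction z with
  | h x y =>
    have hz' : (gccGraph src tgt col).Adj x y := by simpa using hz
    rcases hz' with ⟨S, v, rfl, rfl, hm⟩ | ⟨S, v, rfl, rfl, hm⟩
    · obtain ⟨p, hp⟩ := key S v hm
      exact ⟨p, by simp, hp⟩
    · obtain ⟨p, hp⟩ := key S v hm
      exact ⟨p, by simp, hp.trans Sym2.eq_swap⟩

end GCCLemmas

/-! ### Two-edge connected components of the components of a graph -/

section Tecc

variable {V E : Type} (src tgt : E → V)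

instance [Fintype V] (s : Setoid V) : Fintype (Quotient s) := Fintype.ofFinite _

lemma frak_eq_sum [Fintype V] :
    frak src tgt = ∑ c : {c : Quotient (teccSetoid src tgt) // teccDeg src tgt c ≤ 1},
      (2 - teccDeg src tgt c.1) := by
  have h1 : ∑ c : {c : Quotient (teccSetoid src tgt) // teccDeg src tgt c ≤ 1},
      (2 - teccDeg src tgt c.1) = ∑ c with teccDeg src tgt c ≤ 1, (2 - teccDeg src tgt c) :=
    (Finset.sum_subtype _ (by simp) (fun c => 2 - teccDeg src tgt c)).symm
  rw [h1, Finset.sum_filter, frak, Nat.card_eq_fintype_card, Nat.card_eq_fintype_card,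
    Fintype.card_subtype, Fintype.card_subtype, Finset.card_filter, Finset.card_filter,
    Finset.mul_sum, ← Finset.sum_add_distrib]
  refine Finset.sum_congr rfl fun c _ => ?_
  split_ifs <;> omega

lemma isCutEdge_of_crossing {c : Quotient (teccSetoid src tgt)} {e : E}
    (h : ¬ (Quotient.mk (teccSetoid src tgt) (src e) = c ↔
      Quotient.mk (teccSetoid src tgt) (tgt e) = c)) :
    IsCutEdge src tgt e ∧ (Quotient.mk (teccSetoid src tgt) (src e) = c ∨
      Quotient.mk (teccSetoid src tgt) (tgt e) = c) := by
  refine ⟨?_, by tauto⟩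
  by_contra hn
  have : Quotient.mk (teccSetoid src tgt) (src e) = Quotient.mk (teccSetoid src tgt) (tgt e) :=
    Quotient.sound (reachOn_edge hn)
  exact h (by rw [this])

lemma teccDeg_eq_one_of_crossing [Finite E] {c : Quotient (teccSetoid src tgt)}
    (hc : teccDeg src tgt c ≤ 1) {e : E}
    (h : ¬ (Quotient.mk (teccSetoid src tgt) (src e) = c ↔
      Quotient.mk (teccSetoid src tgt) (tgt e) = c)) : teccDeg src tgt c = 1 := by
  have : Nonempty {e : E // IsCutEdge src tgt e ∧
    (Quotient.mk (teccSetoid src tgt) (src e) = c ∨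
      Quotient.mk (teccSetoid src tgt) (tgt e) = c)} := ⟨⟨e, isCutEdge_of_crossing src tgt h⟩⟩
  exact le_antisymm hc Nat.card_pos

lemma crossing_unique [Finite E] {c : Quotient (teccSetoid src tgt)}
    (hc : teccDeg src tgt c ≤ 1) {e e' : E}
    (h : ¬ (Quotient.mk (teccSetoid src tgt) (src e) = c ↔
      Quotient.mk (teccSetoid src tgt) (tgt e) = c))
    (h' : ¬ (Quotient.mk (teccSetoid src tgt) (src e') = c ↔
      Quotient.mk (teccSetoid src tgt) (tgt e') = c)) : e = e' := by
  have hs := Finite.card_le_one_iff_subsingleton.mp hc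
  exact congrArg Subtype.val (@Subsingleton.elim _ hs
    ⟨e, isCutEdge_of_crossing src tgt h⟩ ⟨e', isCutEdge_of_crossing src tgt h'⟩)

/-- The set of connected components. -/
abbrev Comps : Type := Quotient (connSetoid src tgt ∅)

/-- The vertices of a connected component. -/
abbrev CompV (C : Comps src tgt) : Type := {v : V // Quotient.mk (connSetoid src tgt ∅) v = C}

/-- The edges of a connected component. -/
abbrev CompE (C : Comps src tgt) : Type :=
  {e : E // Quotient.mk (connSetoid src tgt ∅) (src e) = C}

lemma comp_src_eq_tgt (e : E) :
    Quotient.mk (connSetoid src tgt ∅) (src e) = Quotient.mk (connSetoid src tgt ∅) (tgt e) :=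
  Quotient.sound (reachOn_edge (Set.notMem_empty e))

/-- The source map of a connected component. -/
def compSrc (C : Comps src tgt) (e : CompE src tgt C) : CompV src tgt C := ⟨src e.1, e.2⟩

/-- The target map of a connected component. -/
def compTgt (C : Comps src tgt) (e : CompE src tgt C) : CompV src tgt C :=
  ⟨tgt e.1, (comp_src_eq_tgt src tgt e.1).symm.trans e.2⟩

lemma comp_isConnectedGraph (C : Comps src tgt) :
    IsConnectedGraph (compSrc src tgt C) (compTgt src tgt C) := by
  rintro ⟨a, ha⟩ ⟨b, hb⟩
  have hab : reachOn src tgt ∅ a b := Quotient.exact (ha.trans hb.symm)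
  induction hab with
  | refl => exact Relation.ReflTransGen.refl
  | @tail y z hy h ih =>
    have hyC : Quotient.mk (connSetoid src tgt ∅) y = C := by
      rw [← ha]; exact (Quotient.sound hy).symm
    refine (ih hyC).tail ?_
    obtain ⟨e, -, ⟨rfl, rfl⟩ | ⟨rfl, rfl⟩⟩ := h
    · exact ⟨⟨e, hyC⟩, Set.notMem_empty _, Or.inl ⟨rfl, rfl⟩⟩
    · exact ⟨⟨e, hb⟩, Set.notMem_empty _, Or.inr ⟨rfl, rfl⟩⟩

end Tecc

section ColorGraph

variable {V E : Type} (src tgt : E → V) {L : ℕ} (col : E → Fin L) (ℓ : Fin L)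

/-- The edges of color `ℓ`. -/
abbrev ColorE : Type := {e : E // col e = ℓ}

/-- The source map of the subgraph of edges of color `ℓ`. -/
def colorSrc (e : ColorE col ℓ) : ColorVtx src tgt col ℓ := ⟨src e.1, e.1, e.2, Or.inl rfl⟩

/-- The target map of the subgraph of edges of color `ℓ`. -/
def colorTgt (e : ColorE col ℓ) : ColorVtx src tgt col ℓ := ⟨tgt e.1, e.1, e.2, Or.inr rfl⟩

lemma sum_frak_le [Fintype V] [Fintype E] (h2 : ∀ e, reachOn src tgt {e} (src e) (tgt e))
    {U : Type} [Fintype U] (p : ColorVtx src tgt col ℓ → U) (hp : Function.Surjective p)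
    (s t : ColorE col ℓ → U) (hs : ∀ e, s e = p (colorSrc src tgt col ℓ e))
    (ht : ∀ e, t e = p (colorTgt src tgt col ℓ e)) :
    ∑ C : Comps s t, frak (compSrc s t C) (compTgt s t C) ≤
      ∑ S : ColoredComp src tgt col with S.1.1 = ℓ,
        max 2 ((nonBridge (gccGraph src tgt col)).degree (Sum.inl S)) := by
  obtain rfl : s = fun e => p (colorSrc src tgt col ℓ e) := funext hs
  obtain rfl : t = fun e => p (colorTgt src tgt col ℓ e) := funext ht
  clear hs ht
  set s : ColorE col ℓ → U := fun e => p (colorSrc src tgt col ℓ e) with hs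
  set t : ColorE col ℓ → U := fun e => p (colorTgt src tgt col ℓ e) with ht
  simp_rw [frak_eq_sum]
  rw [← Fintype.sum_sigma']
  let W : (Σ C : Comps s t, {c : Quotient (teccSetoid (compSrc s t C) (compTgt s t C)) //
      teccDeg (compSrc s t C) (compTgt s t C) c ≤ 1}) → Set V := fun i =>
    {v | ∃ (h : ∃ e, col e = ℓ ∧ (src e = v ∨ tgt e = v))
      (h' : Quotient.mk (connSetoid s t ∅) (p ⟨v, h⟩) = i.1),
        Quotient.mk (teccSetoid (compSrc s t i.1) (compTgt s t i.1)) ⟨p ⟨v, h⟩, h'⟩ = i.2.1}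
  have hcr : ∀ i e (he : col e = ℓ), ¬ (src e ∈ W i ↔ tgt e ∈ W i) →
      ∃ hC : Quotient.mk (connSetoid s t ∅) (s ⟨e, he⟩) = i.1,
        ¬ (Quotient.mk (teccSetoid (compSrc s t i.1) (compTgt s t i.1))
            (compSrc s t i.1 ⟨⟨e, he⟩, hC⟩) = i.2.1 ↔
          Quotient.mk (teccSetoid (compSrc s t i.1) (compTgt s t i.1))
            (compTgt s t i.1 ⟨⟨e, he⟩, hC⟩) = i.2.1) := by
    intro i e he hcr
    have hst := comp_src_eq_tgt s t ⟨e, he⟩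
    have hC : Quotient.mk (connSetoid s t ∅) (s ⟨e, he⟩) = i.1 := by
      by_cases h : src e ∈ W i
      · obtain ⟨_, h', _⟩ := h
        exact h'
      · obtain ⟨_, h', _⟩ : tgt e ∈ W i := by tauto
        exact hst.trans h'
    refine ⟨hC, fun hiff => hcr ⟨?_, ?_⟩⟩
    · rintro ⟨_, _, h3⟩
      exact ⟨⟨e, he, Or.inr rfl⟩, hst.symm.trans hC, hiff.mp h3⟩
    · rintro ⟨_, _, h3⟩
      exact ⟨⟨e, he, Or.inl rfl⟩, hC, hiff.mpr h3⟩
  refine packing_le h2 ℓ W ?_ (fun i => teccDeg (compSrc s t i.1) (compTgt s t i.1) i.2.1) ?_ ?_ ?_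
  · rintro ⟨C, c, hc⟩ ⟨C', c', hc'⟩ v ⟨h, h', h3⟩ ⟨k, k', k3⟩
    simp only at h' k' h3 k3
    subst h'
    subst k'
    subst h3
    subst k3
    rfl
  · intro i e he h
    obtain ⟨hC, h'⟩ := hcr i e he h
    exact teccDeg_eq_one_of_crossing _ _ i.2.2 h'
  · intro i e e' he h he' h'
    obtain ⟨hC, k⟩ := hcr i e he h
    obtain ⟨hC', k'⟩ := hcr i e' he' h'
    have := crossing_unique _ _ i.2.2 k k'
    exact congrArg (fun x : CompE s t i.1 => x.1.1) this
  · rintro ⟨C, c, hc⟩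
    obtain ⟨⟨u, hu⟩, rfl⟩ := Quotient.exists_rep c
    obtain ⟨⟨v, hv⟩, rfl⟩ := hp u
    refine ⟨v, ⟨hv, hu, rfl⟩, ?_⟩
    obtain ⟨e, he, rfl | rfl⟩ := hv
    · exact ⟨compOfEdge src tgt col e, he, memCC_src e⟩
    · exact ⟨compOfEdge src tgt col e, he, memCC_tgt e⟩

end ColorGraph

/-! ### Traffic sums and injective traffic sums -/

section Sums

variable {V E : Type} [Fintype V] [Fintype E] {N : ℕ}

/-- The sum over all vertex labelings of the product of matrix entries along the edges. -/
def allSum (src tgt : E → V) (M : E → Matrix (Fin N) (Fin N) ℂ) : ℂ :=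
  ∑ φ : V → Fin N, ∏ e, M e (φ (tgt e)) (φ (src e))

/-- The sum over all injective vertex labelings of the product of matrix entries along the
edges. -/
def injSum (src tgt : E → V) (M : E → Matrix (Fin N) (Fin N) ℂ) : ℂ :=
  ∑ φ : V → Fin N, if Function.Injective φ then ∏ e, M e (φ (tgt e)) (φ (src e)) else 0

lemma allSum_eq_prod_comps (src tgt : E → V) (M : E → Matrix (Fin N) (Fin N) ℂ) :
    allSum src tgt M =
      ∏ C : Comps src tgt, allSum (compSrc src tgt C) (compTgt src tgt C) fun e => M e.1 := by
  unfold allSum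
  rw [Finset.prod_univ_sum]
  let f : (V → Fin N) ≃ ((C : Comps src tgt) → CompV src tgt C → Fin N) :=
    { toFun := fun φ _ v => φ v.1
      invFun := fun p v => p (Quotient.mk _ v) ⟨v, rfl⟩
      left_inv := fun _ => rfl
      right_inv := fun p => by
        funext C ⟨v, hv⟩
        subst hv
        rfl }
  refine Eq.trans ?_ (Finset.sum_congr (s₁ := Finset.univ) (by ext; simp) fun _ _ => rfl)
  refine Fintype.sum_equiv f _ _ fun φ => ?_
  exact (Fintype.prod_fiberwise (fun e => Quotient.mk (connSetoid src tgt ∅) (src e))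
    (fun e => M e (φ (tgt e)) (φ (src e)))).symm

/-- The equivalence relation generated by a finite set of pairs. -/
def pairSetoid (F : Finset {x : V × V // x.1 ≠ x.2}) : Setoid V :=
  Relation.EqvGen.setoid fun a b => ∃ x ∈ F, x.1.1 = a ∧ x.1.2 = b

lemma injSum_eq_sum_allSum (src tgt : E → V) (M : E → Matrix (Fin N) (Fin N) ℂ) :
    injSum src tgt M = ∑ F : Finset {x : V × V // x.1 ≠ x.2}, (-1) ^ F.card *
      allSum (fun e => Quotient.mk (pairSetoid F) (src e))
        (fun e => Quotient.mk (pairSetoid F) (tgt e)) M := by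
  have h1 : ∀ φ : V → Fin N, (if Function.Injective φ then (1 : ℂ) else 0) =
      ∑ F : Finset {x : V × V // x.1 ≠ x.2},
        (-1) ^ F.card * if ∀ x ∈ F, φ x.1.1 = φ x.1.2 then (1 : ℂ) else 0 := by
    intro φ
    have h2 : (if Function.Injective φ then (1 : ℂ) else 0) =
        ∏ x : {x : V × V // x.1 ≠ x.2}, (1 + -(if φ x.1.1 = φ x.1.2 then (1 : ℂ) else 0)) := by
      split_ifs with hφ
      · rw [Finset.prod_eq_one]
        intro x _
        rw [if_neg (fun h => x.2 (hφ h))]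
        simp
      · simp only [Function.Injective] at hφ
        push Not at hφ
        obtain ⟨a, b, hab, hne⟩ := hφ
        rw [Finset.prod_eq_zero (Finset.mem_univ ⟨(a, b), hne⟩)]
        simp [hab]
    rw [h2, Finset.prod_one_add, Finset.powerset_univ]
    refine Finset.sum_congr rfl fun F _ => ?_
    rw [Finset.prod_neg, Finset.prod_ite_zero]
    simp
  have h3 : ∀ F : Finset {x : V × V // x.1 ≠ x.2},
      allSum (fun e => Quotient.mk (pairSetoid F) (src e))
        (fun e => Quotient.mk (pairSetoid F) (tgt e)) M =
      ∑ φ : V → Fin N, (if ∀ x ∈ F, φ x.1.1 = φ x.1.2 then (1 : ℂ) else 0) *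
        ∏ e, M e (φ (tgt e)) (φ (src e)) := by
    intro F
    simp_rw [ite_mul, one_mul, zero_mul]
    rw [← Finset.sum_filter, allSum]
    refine Finset.sum_bij (fun ψ _ v => ψ (Quotient.mk _ v)) ?_ ?_ ?_ ?_
    · intro ψ _
      simp only [Finset.mem_filter, Finset.mem_univ, true_and]
      intro x hx
      exact congrArg ψ (Quotient.sound (Relation.EqvGen.rel _ _ ⟨x, hx, rfl, rfl⟩))
    · intro ψ _ ψ' _ h
      funext q
      obtain ⟨v, rfl⟩ := Quotient.exists_rep q
      exact congrFun h v
    · intro φ hφ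
      have hφ' : ∀ x ∈ F, φ x.1.1 = φ x.1.2 := by simpa using hφ
      have hle : pairSetoid F ≤ Setoid.ker φ := by
        refine Setoid.eqvGen_le ?_
        rintro a b ⟨x, hx, rfl, rfl⟩
        exact hφ' x hx
      exact ⟨fun q => Quotient.lift φ (fun a b h => hle h) q, @Finset.mem_univ _ (_) _, rfl⟩
    · intro ψ _
      rfl
  simp_rw [h3, Finset.mul_sum]
  rw [Finset.sum_comm, injSum]
  refine Finset.sum_congr rfl fun φ _ => ?_
  have h4 : (if Function.Injective φ then ∏ e, M e (φ (tgt e)) (φ (src e)) else 0) =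
      (if Function.Injective φ then (1 : ℂ) else 0) * ∏ e, M e (φ (tgt e)) (φ (src e)) := by
    split_ifs <;> simp
  rw [h4, h1, Finset.sum_mul]
  exact Finset.sum_congr rfl fun F _ => by ring

lemma sum_ite_injective (c : ℂ) :
    ∑ φ : V → Fin N, (if Function.Injective φ then c else 0) =
      (N.descFactorial (Fintype.card V) : ℂ) * c := by
  rw [← Finset.sum_filter, Finset.sum_const, nsmul_eq_mul, ← Fintype.card_subtype,
    Fintype.card_congr (Equiv.subtypeInjectiveEquivEmbedding V (Fin N)),
    Fintype.card_embedding_eq, Fintype.card_fin]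

end Sums

lemma trace_eval {L : ℕ} {K : Type} (g : GraphMonomial L K) (hg : g.vin = g.vout) {N : ℕ}
    (A : Fin L → K → Matrix (Fin N) (Fin N) ℂ) :
    Matrix.trace (g.eval A) = allSum g.src g.tgt fun e => A (g.labL e) (g.labK e) := by
  simp only [Matrix.trace, Matrix.diag, GraphMonomial.eval, Matrix.of_apply, hg, and_self]
  rw [Finset.sum_comm]
  simp [allSum]

/-! ### Expectations -/

section Expectations

variable {Ω : Type} [MeasurableSpace Ω] {μ : Measure Ω}
  {K : Type} {L : ℕ} {V E : Type} [Fintype E]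

lemma integrable_prod_entries [IsProbabilityMeasure μ] {N : ℕ}
    (X : E → Ω → Matrix (Fin N) (Fin N) ℂ) (hm : ∀ e, EntriesMeasurable (X e))
    (hb : ∀ e, EntriesBounded μ (X e)) (i j : E → Fin N) :
    Integrable (fun ω => ∏ e, X e ω (i e) (j e)) μ := by
  choose C hC using hb
  refine Integrable.of_bound (Finset.measurable_prod _ fun e _ => hm e _ _).aestronglyMeasurable
    (∏ e, C e) ?_
  filter_upwards [ae_all_iff.mpr hC] with ω hω
  rw [norm_prod]
  exact Finset.prod_le_prod (fun _ _ => norm_nonneg _) fun e _ => hω e _ _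

lemma integrable_allSum [IsProbabilityMeasure μ] [Fintype V] {N : ℕ} (src tgt : E → V)
    (X : E → Ω → Matrix (Fin N) (Fin N) ℂ) (hm : ∀ e, EntriesMeasurable (X e))
    (hb : ∀ e, EntriesBounded μ (X e)) :
    Integrable (fun ω => allSum src tgt fun e => X e ω) μ :=
  integrable_finsetSum _ fun _ _ => integrable_prod_entries X hm hb _ _

lemma integral_injSum [IsProbabilityMeasure μ] [Fintype V] {N : ℕ} (src tgt : E → V)
    (X : E → Ω → Matrix (Fin N) (Fin N) ℂ) (hm : ∀ e, EntriesMeasurable (X e))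
    (hb : ∀ e, EntriesBounded μ (X e)) :
    ∫ ω, injSum src tgt (fun e => X e ω) ∂μ = ∑ φ : V → Fin N,
      if Function.Injective φ then ∫ ω, ∏ e, X e ω (φ (tgt e)) (φ (src e)) ∂μ else 0 := by
  unfold injSum
  rw [integral_finsetSum]
  · refine Finset.sum_congr rfl fun φ _ => ?_
    split_ifs <;> simp
  · intro φ _
    split_ifs
    · exact integrable_prod_entries X hm hb _ _
    · simp

lemma integral_prod_eq_of_injective [Finite V] [Finite K] {N : ℕ}
    (B : K → Ω → Matrix (Fin N) (Fin N) ℂ)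
    (hm : ∀ k, EntriesMeasurable (B k)) (hp : PermInvariant μ B) (src tgt : E → V) (kk : E → K)
    (φ ψ : V → Fin N) (hφ : Function.Injective φ) (hψ : Function.Injective ψ) :
    ∫ ω, ∏ e, B (kk e) ω (φ (tgt e)) (φ (src e)) ∂μ =
      ∫ ω, ∏ e, B (kk e) ω (ψ (tgt e)) (ψ (src e)) ∂μ := by
  obtain ⟨σ, hσ⟩ := Equiv.Perm.exists_extending_pair ψ φ hψ hφ
  let f : (K → Fin N → Fin N → ℂ) → ℂ := fun x => ∏ e, x (kk e) (ψ (tgt e)) (ψ (src e))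
  have hf : Measurable f := by
    refine Finset.measurable_prod _ fun e _ => ?_
    fun_prop
  have hm1 : Measurable fun ω => fun (k : K) (i j : Fin N) => B k ω (σ i) (σ j) :=
    measurable_pi_lambda _ fun k => measurable_pi_lambda _ fun i =>
      measurable_pi_lambda _ fun j => hm k _ _
  have hm2 : Measurable fun ω => fun (k : K) (i j : Fin N) => B k ω i j :=
    measurable_pi_lambda _ fun k => measurable_pi_lambda _ fun i =>
      measurable_pi_lambda _ fun j => hm k _ _
  have h1 := integral_map (μ := μ) hm1.aemeasurable (f := f) hf.aestronglyMeasurable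
  have h2 := integral_map (μ := μ) hm2.aemeasurable (f := f) hf.aestronglyMeasurable
  rw [hp σ] at h1
  rw [h2] at h1
  simp only [f, hσ] at h1
  exact h1.symm

lemma integral_injSum_eq_descFactorial_mul [IsProbabilityMeasure μ] [Fintype V] [Finite K] {N : ℕ}
    (B : K → Ω → Matrix (Fin N) (Fin N) ℂ)
    (hm : ∀ k, EntriesMeasurable (B k)) (hb : ∀ k, EntriesBounded μ (B k))
    (hp : PermInvariant μ B) (src tgt : E → V) (kk : E → K)
    (ψ : V → Fin N) (hψ : Function.Injective ψ) :
    ∫ ω, injSum src tgt (fun e => B (kk e) ω) ∂μ = (N.descFactorial (Fintype.card V) : ℂ) *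
      ∫ ω, ∏ e, B (kk e) ω (ψ (tgt e)) (ψ (src e)) ∂μ := by
  rw [integral_injSum src tgt (fun e => B (kk e)) (fun e => hm _) (fun e => hb _),
    ← sum_ite_injective]
  refine Finset.sum_congr rfl fun φ _ => ?_
  split_ifs with hφ
  · exact integral_prod_eq_of_injective B hm hp src tgt kk φ ψ hφ hψ
  · rfl

lemma integral_prod_eq_prod_colors {N : ℕ} (B : Fin L → K → Ω → Matrix (Fin N) (Fin N) ℂ)
    (hm : ∀ ℓ k, EntriesMeasurable (B ℓ k)) (hi : iIndep (fun ℓ => famSigma (B ℓ)) μ)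
    (src tgt : E → V) (col : E → Fin L) (kk : E → K) (φ : V → Fin N) :
    ∫ ω, ∏ e, B (col e) (kk e) ω (φ (tgt e)) (φ (src e)) ∂μ =
      ∏ ℓ, ∫ ω, ∏ e : ColorE col ℓ, B ℓ (kk e.1) ω (φ (tgt e.1)) (φ (src e.1)) ∂μ := by
  have hind : iIndepFun (fun ℓ ω => ∏ e : ColorE col ℓ,
      B ℓ (kk e.1) ω (φ (tgt e.1)) (φ (src e.1))) μ := by
    rw [iIndepFun_iff_iIndep]
    refine iIndep_of_iIndep_of_le hi fun ℓ => ?_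
    rw [← measurable_iff_comap_le]
    refine Finset.measurable_prod _ fun e _ => ?_
    rw [measurable_iff_comap_le]
    exact le_iSup_of_le (kk e.1) (le_iSup_of_le (φ (tgt e.1)) (le_iSup_of_le (φ (src e.1)) le_rfl))
  rw [← hind.integral_fun_prod_eq_prod_integral fun ℓ =>
    (Finset.measurable_prod _ fun e _ => hm ℓ _ _ _).aestronglyMeasurable]
  refine integral_congr_ae (Eventually.of_forall fun ω => ?_)
  simp only
  rw [← Fintype.prod_fiberwise col]
  refine Finset.prod_congr rfl fun ℓ _ => Finset.prod_congr rfl fun e _ => ?_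
  rw [e.2]

lemma integral_allSum_isBigO [Fintype V]
    (A : (N : ℕ) → Fin L → K → Ω → Matrix (Fin N) (Fin N) ℂ)
    (ℓ : Fin L) (hms : MSBound μ A ℓ) (src tgt : E → V) (kk : E → K) :
    (fun N : ℕ => ∫ ω, allSum src tgt (fun e => A N ℓ (kk e) ω) ∂μ) =O[atTop]
      fun N : ℕ => (N : ℝ) ^
        ((∑ C : Comps src tgt, (frak (compSrc src tgt C) (compTgt src tgt C) : ℝ)) / 2) := by
  rcases isEmpty_or_nonempty V with hV | hV
  · have hE : IsEmpty E := ⟨fun e => hV.elim (src e)⟩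
    have hC : IsEmpty (Comps src tgt) := ⟨fun C => hV.elim C.out⟩
    have h : ∀ N, ∫ ω, allSum src tgt (fun e => A N ℓ (kk e) ω) ∂μ = μ.real Set.univ := by
      intro N
      simp [allSum]
    simp only [h, Finset.univ_eq_empty, Finset.sum_empty, zero_div, Real.rpow_zero]
    exact isBigO_const_const _ (one_ne_zero (α := ℝ)) _
  · let m := Fintype.card (Comps src tgt)
    let f : Comps src tgt ≃ Fin m := Fintype.equivFin _
    have hne : Nonempty (Comps src tgt) := hV.map (Quotient.mk _)
    have hm : 1 ≤ m := Fintype.card_pos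
    let gs : Fin m → GraphMonomial L K := fun i =>
      { V := CompV src tgt (f.symm i)
        E := CompE src tgt (f.symm i)
        fintV := inferInstance
        fintE := inferInstance
        src := compSrc src tgt (f.symm i)
        tgt := compTgt src tgt (f.symm i)
        vin := ⟨(f.symm i).out, Quotient.out_eq _⟩
        vout := ⟨(f.symm i).out, Quotient.out_eq _⟩
        labL := fun _ => ℓ
        labK := fun e => kk e.1 }
    have h := hms m hm gs fun i => ⟨comp_isConnectedGraph src tgt _, fun _ => rfl, rfl⟩
    have h1 : ∑ C : Comps src tgt, (frak (compSrc src tgt C) (compTgt src tgt C) : ℝ) =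
        ∑ i, (frak (gs i).src (gs i).tgt : ℝ) :=
      (Fintype.sum_equiv f.symm _ _ fun _ => rfl).symm
    rw [h1]
    refine h.congr_left fun N => integral_congr_ae (Eventually.of_forall fun ω => ?_)
    simp only
    rw [allSum_eq_prod_comps]
    refine (Fintype.prod_equiv f.symm _ _ fun i => ?_)
    rw [trace_eval _ rfl]

lemma integral_injSum_isBigO [IsProbabilityMeasure μ] [Fintype V]
    (A : (N : ℕ) → Fin L → K → Ω → Matrix (Fin N) (Fin N) ℂ)
    (hmeas : ∀ N ℓ k, EntriesMeasurable (A N ℓ k)) (hbdd : ∀ N ℓ k, EntriesBounded μ (A N ℓ k))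
    (ℓ : Fin L) (hms : MSBound μ A ℓ) (src tgt : E → V) (kk : E → K) (P : ℕ)
    (hP : ∀ s : Setoid V,
      ∑ C : Comps (fun e => Quotient.mk s (src e)) (fun e => Quotient.mk s (tgt e)),
        frak (compSrc _ _ C) (compTgt _ _ C) ≤ P) :
    (fun N : ℕ => ∫ ω, injSum src tgt (fun e => A N ℓ (kk e) ω) ∂μ) =O[atTop]
      fun N : ℕ => (N : ℝ) ^ ((P : ℝ) / 2) := by
  have h1 : ∀ N, ∫ ω, injSum src tgt (fun e => A N ℓ (kk e) ω) ∂μ =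
      ∑ F : Finset {x : V × V // x.1 ≠ x.2}, (-1) ^ F.card *
        ∫ ω, allSum (fun e => Quotient.mk (pairSetoid F) (src e))
          (fun e => Quotient.mk (pairSetoid F) (tgt e)) (fun e => A N ℓ (kk e) ω) ∂μ := by
    intro N
    simp_rw [injSum_eq_sum_allSum]
    rw [integral_finsetSum]
    · simp_rw [integral_const_mul]
    · intro F _
      exact (integrable_allSum _ _ _ (fun e => hmeas _ _ _) (fun e => hbdd _ _ _)).const_mul _
  simp_rw [h1]
  refine IsBigO.fun_sum fun F _ => ?_
  refine IsBigO.const_mul_left ?_ _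
  refine (integral_allSum_isBigO A ℓ hms _ _ kk).trans ?_
  refine IsBigO.of_bound 1 ?_
  filter_upwards [eventually_ge_atTop 1] with N hN
  have hN' : (1 : ℝ) ≤ N := by exact_mod_cast hN
  rw [one_mul, Real.norm_of_nonneg (by positivity), Real.norm_of_nonneg (by positivity)]
  refine Real.rpow_le_rpow_of_exponent_le hN' ?_
  have := hP (pairSetoid F)
  gcongr
  exact_mod_cast this

end Expectations

/-! ### The bound for a graph without cut edges -/

lemma inv_descFactorial_isBigO (k : ℕ) :
    (fun N : ℕ => ((N.descFactorial k : ℂ))⁻¹) =O[atTop] fun N : ℕ => (N : ℝ) ^ (-(k : ℝ)) := by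
  refine IsBigO.of_bound ((2 : ℝ) ^ k) ?_
  filter_upwards [eventually_ge_atTop (2 * k + 1)] with N hN
  have hN0 : (0 : ℝ) < N := by exact_mod_cast (by omega : 0 < N)
  have h1 : ((N : ℝ) / 2) ^ k ≤ (N.descFactorial k : ℝ) := by
    have h2 : ((N + 1 - k : ℕ) : ℝ) ^ k ≤ (N.descFactorial k : ℝ) := by
      exact_mod_cast Nat.pow_sub_le_descFactorial N k
    refine le_trans (pow_le_pow_left₀ (by positivity) ?_ k) h2
    rw [Nat.cast_sub (by omega)]
    have : (2 * k + 1 : ℝ) ≤ N := by exact_mod_cast hN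
    push_cast
    linarith
  rw [norm_inv, Complex.norm_natCast, Real.rpow_neg hN0.le, Real.rpow_natCast, norm_inv, norm_pow,
    Real.norm_natCast]
  calc ((N.descFactorial k : ℝ))⁻¹ ≤ (((N : ℝ) / 2) ^ k)⁻¹ := inv_anti₀ (by positivity) h1
    _ = 2 ^ k * ((N : ℝ) ^ k)⁻¹ := by rw [div_pow, inv_div, div_eq_mul_inv]

section MainBound

variable {Ω : Type} [MeasurableSpace Ω] {μ : Measure Ω} [IsProbabilityMeasure μ]
  {K : Type} {L : ℕ} {V E : Type} [Fintype V]

lemma two_mul_card_add_sum_le [Nonempty V] (src tgt : E → V) (col : E → Fin L)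
    (hconn : IsConnectedGraph src tgt) (hnt : ¬ (gccGraph src tgt col).IsTree) :
    2 * Fintype.card V + ∑ ℓ, ∑ S : ColoredComp src tgt col with S.1.1 = ℓ,
      max 2 ((nonBridge (gccGraph src tgt col)).degree (Sum.inl S)) ≤
    2 * ∑ ℓ, Fintype.card (ColorVtx src tgt col ℓ) := by
  have hc := gccGraph_connected (col := col) hconn
  have hna : ¬ (gccGraph src tgt col).IsAcyclic := fun h => hnt ⟨hc, h⟩
  have h1 := sum_max_two_nonBridge_degree_le _ hc hna
  have h2 := card_gccGraph_edges_le (src := src) (tgt := tgt) (col := col)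
  rw [Fintype.sum_sum_type] at h1
  have h3 : 2 * Fintype.card V ≤
      ∑ v : V, max 2 ((nonBridge (gccGraph src tgt col)).degree (Sum.inr v)) := by
    calc 2 * Fintype.card V = ∑ _v : V, 2 := by simp [mul_comm]
      _ ≤ _ := Finset.sum_le_sum fun _ _ => le_max_left _ _
  rw [Finset.sum_fiberwise]
  omega

variable [Fintype E]

lemma integral_injSum_eq_prod [Finite K] {N : ℕ} (B : Fin L → K → Ω → Matrix (Fin N) (Fin N) ℂ)
    (hm : ∀ ℓ k, EntriesMeasurable (B ℓ k)) (hb : ∀ ℓ k, EntriesBounded μ (B ℓ k))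
    (hi : iIndep (fun ℓ => famSigma (B ℓ)) μ) (hp : ∀ ℓ, PermInvariant μ (B ℓ))
    (src tgt : E → V) (col : E → Fin L) (kk : E → K) :
    ∫ ω, injSum src tgt (fun e => B (col e) (kk e) ω) ∂μ = (N.descFactorial (Fintype.card V) : ℂ) *
      ∏ ℓ, (((N.descFactorial (Fintype.card (ColorVtx src tgt col ℓ)) : ℂ))⁻¹ *
        ∫ ω, injSum (colorSrc src tgt col ℓ) (colorTgt src tgt col ℓ)
          (fun e => B ℓ (kk e.1) ω) ∂μ) := by
  rw [integral_injSum src tgt (fun e => B (col e) (kk e)) (fun _ => hm _ _) (fun _ => hb _ _),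
    ← sum_ite_injective]
  refine Finset.sum_congr rfl fun φ _ => ?_
  split_ifs with hφ
  · rw [integral_prod_eq_prod_colors B hm hi]
    refine Finset.prod_congr rfl fun ℓ _ => ?_
    have hψ : Function.Injective fun v : ColorVtx src tgt col ℓ => φ v.1 :=
      hφ.comp Subtype.val_injective
    rw [integral_injSum_eq_descFactorial_mul (B ℓ) (hm ℓ) (hb ℓ) (hp ℓ) (colorSrc src tgt col ℓ)
      (colorTgt src tgt col ℓ) (fun e => kk e.1) _ hψ, inv_mul_cancel_left₀]
    · rfl
    · have := Fintype.card_le_of_injective _ hψ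
      rw [Fintype.card_fin] at this
      rw [Nat.cast_ne_zero, Ne, Nat.descFactorial_eq_zero_iff_lt]
      omega
  · rfl

lemma integral_injSum_color_isBigO (A : (N : ℕ) → Fin L → K → Ω → Matrix (Fin N) (Fin N) ℂ)
    (hmeas : ∀ N ℓ k, EntriesMeasurable (A N ℓ k)) (hbdd : ∀ N ℓ k, EntriesBounded μ (A N ℓ k))
    (ℓ : Fin L) (hms : MSBound μ A ℓ) (src tgt : E → V) (col : E → Fin L) (kk : E → K)
    (h2 : ∀ e, reachOn src tgt {e} (src e) (tgt e)) :
    (fun N : ℕ => ∫ ω, injSum (colorSrc src tgt col ℓ) (colorTgt src tgt col ℓ)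
        (fun e => A N ℓ (kk e.1) ω) ∂μ) =O[atTop]
      fun N : ℕ => (N : ℝ) ^ (((∑ S : ColoredComp src tgt col with S.1.1 = ℓ,
        max 2 ((nonBridge (gccGraph src tgt col)).degree (Sum.inl S)) : ℕ) : ℝ) / 2) :=
  integral_injSum_isBigO A hmeas hbdd ℓ hms (colorSrc src tgt col ℓ) (colorTgt src tgt col ℓ)
    (fun e => kk e.1) _ fun s => sum_frak_le src tgt col ℓ h2 (Quotient.mk s)
      Quotient.mk_surjective _ _ (fun _ => rfl) fun _ => rfl

lemma integral_injSum_isBigO_one [Finite K] [Nonempty V]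
    (A : (N : ℕ) → Fin L → K → Ω → Matrix (Fin N) (Fin N) ℂ)
    (hmeas : ∀ N ℓ k, EntriesMeasurable (A N ℓ k)) (hbdd : ∀ N ℓ k, EntriesBounded μ (A N ℓ k))
    (hindep : IndepFamilies μ A) (hperm : ∀ N ℓ, PermInvariant μ (A N ℓ))
    (hms : ∀ ℓ, MSBound μ A ℓ) (src tgt : E → V) (col : E → Fin L) (kk : E → K)
    (hconn : IsConnectedGraph src tgt) (h2 : ∀ e, reachOn src tgt {e} (src e) (tgt e))
    (hnt : ¬ (gccGraph src tgt col).IsTree) :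
    (fun N : ℕ => ∫ ω, injSum src tgt (fun e => A N (col e) (kk e) ω) ∂μ) =O[atTop]
      fun _ : ℕ => (1 : ℝ) := by
  simp_rw [fun N => integral_injSum_eq_prod (A N) (hmeas N) (hbdd N) (hindep N) (hperm N)
    src tgt col kk]
  let P : Fin L → ℕ := fun ℓ => ∑ S : ColoredComp src tgt col with S.1.1 = ℓ,
    max 2 ((nonBridge (gccGraph src tgt col)).degree (Sum.inl S))
  let c : Fin L → ℕ := fun ℓ => Fintype.card (ColorVtx src tgt col ℓ)
  have hle : 2 * Fintype.card V + ∑ ℓ, P ℓ ≤ 2 * ∑ ℓ, c ℓ :=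
    two_mul_card_add_sum_le src tgt col hconn hnt
  have hV : (fun N : ℕ => (N.descFactorial (Fintype.card V) : ℂ)) =O[atTop]
      fun N : ℕ => (N : ℝ) ^ (Fintype.card V : ℝ) := by
    refine IsBigO.of_bound 1 (Eventually.of_forall fun N => ?_)
    rw [Complex.norm_natCast, Real.rpow_natCast, one_mul, norm_pow, Real.norm_natCast]
    exact_mod_cast Nat.descFactorial_le_pow _ _
  have hℓ : ∀ ℓ, (fun N : ℕ => ((N.descFactorial (Fintype.card (ColorVtx src tgt col ℓ)) : ℂ))⁻¹ *
      ∫ ω, injSum (colorSrc src tgt col ℓ) (colorTgt src tgt col ℓ)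
        (fun e => A N ℓ (kk e.1) ω) ∂μ) =O[atTop]
      fun N : ℕ => (N : ℝ) ^ (-(c ℓ : ℝ)) * (N : ℝ) ^ ((P ℓ : ℝ) / 2) := by
    intro ℓ
    exact (inv_descFactorial_isBigO _).mul
      (integral_injSum_color_isBigO A hmeas hbdd ℓ (hms ℓ) src tgt col kk h2)
  have hprod := hV.mul (IsBigO.finsetProd (s := Finset.univ) fun ℓ _ => hℓ ℓ)
  refine hprod.trans (IsBigO.of_bound 1 ?_)
  filter_upwards [eventually_ge_atTop 1] with N hN
  have hN1 : (1 : ℝ) ≤ N := by exact_mod_cast hN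
  have hN0 : (0 : ℝ) < N := by linarith
  simp_rw [← Real.rpow_add hN0]
  rw [← Real.rpow_sum_of_pos hN0, ← Real.rpow_add hN0, one_mul, norm_one, Real.norm_of_nonneg
    (Real.rpow_nonneg hN0.le _)]
  refine Real.rpow_le_one_of_one_le_of_nonpos hN1 ?_
  rw [Finset.sum_add_distrib, Finset.sum_neg_distrib, ← Finset.sum_div]
  have hle' : (2 * Fintype.card V + ∑ ℓ, (P ℓ : ℝ) : ℝ) ≤ 2 * ∑ ℓ, (c ℓ : ℝ) := by
    exact_mod_cast hle
  linarith

end MainBound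

/-! ### The glued graph is connected and has no cut edge -/

lemma reachOn_map {V E V' E' : Type} {src tgt : E → V} {src' tgt' : E' → V'} {F : Set E}
    {F' : Set E'} (f : V → V') (m : E → E') (hs : ∀ e, src' (m e) = f (src e))
    (ht : ∀ e, tgt' (m e) = f (tgt e)) (hF : ∀ e, e ∉ F → m e ∉ F') {a b : V}
    (h : reachOn src tgt F a b) : reachOn src' tgt' F' (f a) (f b) := by
  refine Relation.ReflTransGen.lift f ?_ _ _ h
  rintro x y ⟨e, he, ⟨rfl, rfl⟩ | ⟨rfl, rfl⟩⟩
  · exact ⟨m e, hF e he, Or.inl ⟨hs e, ht e⟩⟩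
  · exact ⟨m e, hF e he, Or.inr ⟨hs e, ht e⟩⟩

section Glued

variable {L : ℕ} {K : Type}

lemma GraphMonomial.IsSimpleCycle.reachOn {g : GraphMonomial L K} {l : List (g.E × Bool)}
    (hc : g.IsSimpleCycle l) {e : g.E} (he : e ∈ l.map Prod.fst) :
    reachOn g.src g.tgt {e} (g.src e) (g.tgt e) := by
  obtain ⟨hne, hstep, hnd, -⟩ := hc
  obtain ⟨i, hi, rfl⟩ := List.mem_iff_getElem.mp he
  rw [List.length_map] at hi
  rw [List.getElem_map]
  have hpos : 0 < l.length := List.length_pos_iff.mpr hne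
  have hdist : ∀ j (hj : j < l.length), j ≠ i → (l[j]).1 ≠ (l[i]).1 := by
    intro j hj hji h
    refine hji ((List.Nodup.getElem_inj_iff hnd (hi := by simpa using hj)
      (hj := by simpa using hi)).mp ?_)
    simpa using h
  have key : ∀ k, k + 1 ≤ l.length → _root_.reachOn g.src g.tgt {(l[i]).1} (g.stepTgt l[i])
      (g.stepSrc (l[(i + 1 + k) % l.length]'(Nat.mod_lt _ hpos))) := by
    intro k
    induction k with
    | zero =>
      intro _
      rw [show g.stepTgt l[i] = _ from hstep ⟨i, hi⟩]
      exact Relation.ReflTransGen.refl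
    | succ k ih =>
      intro hk
      have hlt : (i + 1 + k) % l.length < l.length := Nat.mod_lt _ hpos
      have hne' : (i + 1 + k) % l.length ≠ i := by
        rcases lt_or_ge (i + 1 + k) l.length with h | h
        · rw [Nat.mod_eq_of_lt h]; omega
        · rw [Nat.mod_eq_sub_mod h, Nat.mod_eq_of_lt (by omega)]; omega
      have hs : g.stepTgt (l[(i + 1 + k) % l.length]) =
          g.stepSrc (l[(i + 1 + (k + 1)) % l.length]'(Nat.mod_lt _ hpos)) := by
        rw [show g.stepTgt (l[(i + 1 + k) % l.length]) = _ from hstep ⟨_, hlt⟩]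
        simp [Nat.mod_add_mod, add_assoc]
      rw [← hs]
      refine (ih (by omega)).tail ⟨(l[(i + 1 + k) % l.length]).1, hdist _ hlt hne', ?_⟩
      unfold GraphMonomial.stepSrc GraphMonomial.stepTgt
      cases (l[(i + 1 + k) % l.length]).2 <;> simp
  have hfin := key (l.length - 1) (by omega)
  have hidx : (i + 1 + (l.length - 1)) % l.length = i := by
    rw [show i + 1 + (l.length - 1) = i + l.length by omega, Nat.add_mod_right,
      Nat.mod_eq_of_lt hi]
  simp only [hidx] at hfin
  unfold GraphMonomial.stepSrc GraphMonomial.stepTgt at hfin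
  cases h : (l[i]).2 <;> simp only [h] at hfin
  · simpa using hfin
  · exact reachOn_symm (by simpa using hfin)

variable (n : ℕ) (d : Fin n → ℕ) (g : Fin n → ℕ → GraphMonomial L K)

lemma glue_inVtx (i : Fin n) :
    Quotient.mk (glueSetoid n d g) (inVtx n d g i) =
      Quotient.mk (glueSetoid n d g) (outVtx n d g (nxt i)) :=
  Quotient.sound (Relation.EqvGen.rel _ _ ⟨i, rfl, rfl⟩)

lemma reachOn_pathVtx {F : Set (BigE n d g)} (i : Fin n) (a b : ℕ) (hab : a ≤ b) (hb : b < d i + 1)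
    (hF : ∀ j : Fin (d i), a ≤ j → (j : ℕ) < b → (Sum.inr ⟨i, j⟩ : BigE n d g) ∉ F) :
    reachOn (bigSrc n d g) (bigTgt n d g) F
      (Quotient.mk _ (pathVtx n d g i ⟨a, hab.trans_lt hb⟩))
      (Quotient.mk _ (pathVtx n d g i ⟨b, hb⟩)) := by
  induction b, hab using Nat.le_induction with
  | base => exact Relation.ReflTransGen.refl
  | succ b hab ih =>
    have hbd : b < d i := by omega
    refine (ih (by omega) fun j h1 h2 => hF j h1 (by omega)).tail ?_
    exact ⟨Sum.inr ⟨i, ⟨b, hbd⟩⟩, hF ⟨b, hbd⟩ hab (Nat.lt_succ_self b), Or.inr ⟨rfl, rfl⟩⟩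

lemma reachOn_outVtx {F : Set (BigE n d g)} (i₀ : Fin n)
    (hF : ∀ i, i ≠ i₀ → ∀ j : Fin (d i), (Sum.inr ⟨i, j⟩ : BigE n d g) ∉ F) (i : Fin n) :
    reachOn (bigSrc n d g) (bigTgt n d g) F
      (Quotient.mk _ (inVtx n d g i₀)) (Quotient.mk _ (outVtx n d g i)) := by
  have hn : 0 < n := i₀.pos
  have key : ∀ k, k + 1 ≤ n → reachOn (bigSrc n d g) (bigTgt n d g) F
      (Quotient.mk _ (inVtx n d g i₀))
      (Quotient.mk _ (outVtx n d g ⟨(i₀ + 1 + k) % n, Nat.mod_lt _ hn⟩)) := by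
    intro k
    induction k with
    | zero =>
      intro _
      rw [glue_inVtx]
      exact Relation.ReflTransGen.refl
    | succ k ih =>
      intro hk
      have hne : (⟨(i₀ + 1 + k) % n, Nat.mod_lt _ hn⟩ : Fin n) ≠ i₀ := by
        intro h
        have h' : ((i₀ : ℕ) + 1 + k) % n = i₀ := congrArg Fin.val h
        have := i₀.isLt
        rcases lt_or_ge ((i₀ : ℕ) + 1 + k) n with h2 | h2
        · rw [Nat.mod_eq_of_lt h2] at h'; omega
        · rw [Nat.mod_eq_sub_mod h2, Nat.mod_eq_of_lt (by omega)] at h'; omega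
      have h1 := (ih (by omega)).trans
        (reachOn_pathVtx n d g ⟨(i₀ + 1 + k) % n, Nat.mod_lt _ hn⟩ 0 (d _) (Nat.zero_le _)
          (Nat.lt_succ_self _) fun j _ _ => hF _ hne j)
      have h2 := glue_inVtx n d g ⟨(i₀ + 1 + k) % n, Nat.mod_lt _ hn⟩
      have h3 : nxt (⟨(i₀ + 1 + k) % n, Nat.mod_lt _ hn⟩ : Fin n) =
          ⟨(i₀ + 1 + (k + 1)) % n, Nat.mod_lt _ hn⟩ := by
        simp [nxt, Nat.mod_add_mod, add_assoc]
      rw [← h3, ← h2]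
      exact h1
  have hi := i.isLt
  have hi₀ := i₀.isLt
  rcases lt_or_ge (i₀ : ℕ) i with h | h
  · convert key (i - i₀ - 1) (by omega)
    rw [show (i₀ : ℕ) + 1 + (i - i₀ - 1) = i by omega, Nat.mod_eq_of_lt hi]
  · convert key (i + n - i₀ - 1) (by omega)
    rw [show (i₀ : ℕ) + 1 + (i + n - i₀ - 1) = i + n by omega, Nat.add_mod_right,
      Nat.mod_eq_of_lt hi]

lemma reachOn_cactus {i : Fin n} {j : Fin (d i + 1)} {F : Set (g i j).E} {F' : Set (BigE n d g)}
    (hF : ∀ e, e ∉ F → (Sum.inl ⟨i, j, e⟩ : BigE n d g) ∉ F') {v w : (g i j).V}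
    (h : reachOn (g i j).src (g i j).tgt F v w) :
    reachOn (bigSrc n d g) (bigTgt n d g) F'
      (Quotient.mk _ (⟨i, j, v⟩ : BigV n d g)) (Quotient.mk _ (⟨i, j, w⟩ : BigV n d g)) :=
  reachOn_map (fun v => Quotient.mk _ (⟨i, j, v⟩ : BigV n d g))
    (fun e => (Sum.inl ⟨i, j, e⟩ : BigE n d g)) (fun _ => rfl) (fun _ => rfl) hF h

lemma bigGraph_connected (hg : ∀ (i : Fin n) (j : ℕ), j ≤ d i → (g i j).IsCactusType) :
    IsConnectedGraph (bigSrc n d g) (bigTgt n d g) := by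
  have h : ∀ (i₀ : Fin n) (x : BigV n d g), reachOn (bigSrc n d g) (bigTgt n d g) ∅
      (Quotient.mk _ (inVtx n d g i₀)) (Quotient.mk _ x) := by
    rintro i₀ ⟨i, j, v⟩
    refine (reachOn_outVtx n d g i₀ (fun _ _ _ => id) i).trans
      ((reachOn_pathVtx n d g i 0 j (Nat.zero_le _) j.isLt fun _ _ _ => id).trans ?_)
    exact reachOn_cactus n d g (F := ∅) (fun _ _ => id)
      ((hg i j (Nat.lt_succ_iff.mp j.isLt)).2.1 _ _)
  rintro ⟨x⟩ ⟨y⟩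
  exact (reachOn_symm (h x.1 x)).trans (h x.1 y)

lemma bigGraph_not_isCutEdge (hg : ∀ (i : Fin n) (j : ℕ), j ≤ d i → (g i j).IsCactusType)
    (e : BigE n d g) :
    reachOn (bigSrc n d g) (bigTgt n d g) {e} (bigSrc n d g e) (bigTgt n d g e) := by
  rcases e with ⟨i, j, e⟩ | ⟨i, j⟩
  · obtain ⟨S, ⟨⟨c, hc, hcS⟩, heS⟩, -⟩ := (hg i j (Nat.lt_succ_iff.mp j.isLt)).2.2.2 e
    refine reachOn_cactus n d g (F := {e}) ?_ (hc.reachOn ?_)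
    · intro e' he' h
      cases Sum.inl.inj h
      exact he' rfl
    · rw [← hcS] at heS
      simpa using heS
  · have hj := j.isLt
    have h1 : reachOn (bigSrc n d g) (bigTgt n d g) {Sum.inr ⟨i, j⟩}
        (Quotient.mk _ (pathVtx n d g i j.succ)) (Quotient.mk _ (inVtx n d g i)) := by
      refine reachOn_pathVtx n d g i (j + 1) (d i) hj (Nat.lt_succ_self _) ?_
      intro j' h1 _ h
      cases Sum.inr.inj h
      omega
    have h2 : reachOn (bigSrc n d g) (bigTgt n d g) {Sum.inr ⟨i, j⟩}
        (Quotient.mk _ (inVtx n d g i)) (Quotient.mk _ (outVtx n d g i)) := by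
      refine reachOn_outVtx n d g i ?_ i
      intro i' hi' j' h
      cases Sum.inr.inj h
      exact hi' rfl
    have h3 : reachOn (bigSrc n d g) (bigTgt n d g) {Sum.inr ⟨i, j⟩}
        (Quotient.mk _ (outVtx n d g i)) (Quotient.mk _ (pathVtx n d g i j.castSucc)) := by
      refine reachOn_pathVtx n d g i 0 j (Nat.zero_le _) (by omega) ?_
      intro j' _ h1 h
      cases Sum.inr.inj h
      omega
    exact h1.trans (h2.trans h3)

/-- The second label index carried by each edge of the glued graph. -/
def bigLabK (kv : Fin n → ℕ → K) : BigE n d g → K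
  | Sum.inl ⟨i, j, e⟩ => (g i j).labK e
  | Sum.inr ⟨i, j⟩ => kv i (j + 1)

lemma ncomp_eq_one {V E : Type} [Nonempty V] {src tgt : E → V}
    (h : IsConnectedGraph src tgt) : ncomp src tgt = 1 := by
  unfold ncomp ncompAvoiding
  rw [Nat.card_eq_one_iff_unique]
  refine ⟨⟨?_⟩, ⟨Quotient.mk _ (Classical.arbitrary V)⟩⟩
  rintro ⟨a⟩ ⟨b⟩
  exact Quotient.sound (h a b)

lemma TestGraph.tau0Inner_eq_injSum {N : ℕ} {Ω : Type} (T : TestGraph N Ω) (ω : Ω) :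
    T.tau0Inner ω = injSum T.src T.tgt fun e => T.lab e ω := by
  unfold TestGraph.tau0Inner injSum
  congr!

lemma injSum_fintype {V E : Type} {N : ℕ} [Fintype E] (h₁ h₂ : Fintype V) (src tgt : E → V)
    (M : E → Matrix (Fin N) (Fin N) ℂ) :
    @injSum V E h₁ _ N src tgt M = @injSum V E h₂ _ N src tgt M := by
  rw [Subsingleton.elim h₁ h₂]

lemma tau0Inner_quot_bigTG {Ω : Type} {N : ℕ} (ℓv : Fin n → Fin L) (kv : Fin n → ℕ → K)
    (B : Fin L → K → Ω → Matrix (Fin N) (Fin N) ℂ) (π : Setoid (Quotient (glueSetoid n d g)))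
    (ω : Ω) :
    TestGraph.tau0Inner (TestGraph.quot (bigTG n ℓv d kv g N B) π) ω =
      injSum (fun e => Quotient.mk π (bigSrc n d g e)) (fun e => Quotient.mk π (bigTgt n d g e))
        (fun e => B (bigCol n ℓv d g e) (bigLabK n d g kv e) ω) := by
  have hlab : (fun e => B (bigCol n ℓv d g e) (bigLabK n d g kv e) ω) =
      fun e => (bigTG n ℓv d kv g N B).lab e ω := by
    funext e
    rcases e with ⟨i, j, e⟩ | ⟨i, j⟩ <;> rfl
  rw [hlab, TestGraph.tau0Inner_eq_injSum]
  exact injSum_fintype _ _ _ _ _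

end Glued

/-- Lemma 4.7.
If the families are independent, permutation invariant, and satisfy the growth
bound (MS), then for every partition `π` of the vertices of the test graph `T`
such that the graph of colored components of `T^π` is not a tree, one has
`τ⁰_N[T^π] = O(N⁻¹)` as `N → ∞`. -/
theorem tau0_bigO_inv_of_gcc_not_tree
    {Ω : Type} [MeasurableSpace Ω] (μ : Measure Ω) [IsProbabilityMeasure μ]
    {K : Type} [Nonempty K] [Finite K] {L : ℕ} (hL : 1 ≤ L)
    (A : (N : ℕ) → Fin L → K → Ω → Matrix (Fin N) (Fin N) ℂ)
    (hmeas : ∀ N ℓ k, EntriesMeasurable (A N ℓ k))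
    (hbdd : ∀ N ℓ k, EntriesBounded μ (A N ℓ k))
    (hindep : IndepFamilies μ A)
    (hperm : ∀ (N : ℕ) (ℓ : Fin L), PermInvariant μ (A N ℓ))
    (hms : ∀ ℓ : Fin L, MSBound μ A ℓ)
    (n : ℕ) (hn : 2 ≤ n) (ℓv : Fin n → Fin L)
    (hadj : ∀ (i : ℕ) (h1 : i + 1 < n),
      ℓv ⟨i, Nat.lt_of_succ_lt h1⟩ ≠ ℓv ⟨i + 1, h1⟩)
    (d : Fin n → ℕ) (hd : ∀ i, 1 ≤ d i) (kv : Fin n → ℕ → K)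
    (g : Fin n → ℕ → GraphMonomial L K)
    (hg : ∀ (i : Fin n) (j : ℕ), j ≤ d i → (g i j).IsCactusType)
    (π : Setoid (Quotient (glueSetoid n d g)))
    (hnottree : ¬ (gccGraph (fun e => Quotient.mk π (bigSrc n d g e))
        (fun e => Quotient.mk π (bigTgt n d g e)) (bigCol n ℓv d g)).IsTree) :
    (fun N : ℕ => TestGraph.tau0 (TestGraph.quot (bigTG n ℓv d kv g N (A N)) π) μ)
      =O[atTop] fun N : ℕ => ((N : ℝ))⁻¹ := by
  have hconn : IsConnectedGraph (fun e => Quotient.mk π (bigSrc n d g e))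
      (fun e => Quotient.mk π (bigTgt n d g e)) := by
    rintro ⟨a⟩ ⟨b⟩
    exact reachOn_map (Quotient.mk π) (fun e => e) (fun _ => rfl) (fun _ => rfl) (fun _ h => h)
      (bigGraph_connected n d g hg a b)
  have h2 : ∀ e, reachOn (fun e => Quotient.mk π (bigSrc n d g e))
      (fun e => Quotient.mk π (bigTgt n d g e)) {e} (Quotient.mk π (bigSrc n d g e))
      (Quotient.mk π (bigTgt n d g e)) := fun e =>
    reachOn_map (Quotient.mk π) (fun e => e) (fun _ => rfl) (fun _ => rfl) (fun _ h => h)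
      (bigGraph_not_isCutEdge n d g hg e)
  have hne : Nonempty (Quotient π) :=
    ⟨Quotient.mk π (Quotient.mk _ (inVtx n d g ⟨0, by omega⟩))⟩
  have hmain := integral_injSum_isBigO_one A hmeas hbdd hindep hperm hms _ _ (bigCol n ℓv d g)
    (bigLabK n d g kv) hconn h2 hnottree
  have heq : ∀ N, TestGraph.tau0 (TestGraph.quot (bigTG n ℓv d kv g N (A N)) π) μ =
      (N : ℂ)⁻¹ * ∫ ω, injSum (fun e => Quotient.mk π (bigSrc n d g e))
        (fun e => Quotient.mk π (bigTgt n d g e))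
        (fun e => A N (bigCol n ℓv d g e) (bigLabK n d g kv e) ω) ∂μ := by
    intro N
    have hncc : (TestGraph.quot (bigTG n ℓv d kv g N (A N)) π).ncc = 1 :=
      ncomp_eq_one (V := Quotient π) hconn
    simp only [TestGraph.tau0, hncc, pow_one, tau0Inner_quot_bigTG]
  simp_rw [heq]
  have hinv : (fun N : ℕ => (N : ℂ)⁻¹) =O[atTop] fun N : ℕ => ((N : ℝ))⁻¹ :=
    IsBigO.of_bound 1 (Eventually.of_forall fun N => by simp)
  simpa using hinv.mul hmain
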